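/- Let 0 < d < n be integers and let E ⊆ ℝ^n be a LARRF set of dimension d with constants ε and C₀, where ε is small enough depending only on n and d. Then there exist constants θ > 0 and M > 0, depending only on n, d and C₀, such that for every x ∈ E and 0 < r ≤ 1 there are a d-dimensional affine plane P and an M-Lipschitz map F : P → P^⊥ (P^⊥ the (n−d)-dimensional linear subspace orthogonal to P) such that H^d( E ∩ Γ_F ∩ B(x,r) ) ≥ θ r^d, where Γ_F = { z + F(z) : z ∈ P } is the graph of F over P. (Theorem 15.4: LARRF sets contain big pieces of Lipschitz graphs.) -/

import Mathlib

open Metric Set MeasureTheory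
open scoped ENNReal

noncomputable section

set_option synthInstance.maxHeartbeats 1000000
set_option maxHeartbeats 1000000

/-- `ℝⁿ`. -/
abbrev V (n : ℕ) := EuclideanSpace ℝ (Fin n)

/-- `P` is a `d`-dimensional affine plane of `ℝⁿ`. -/
def IsAffinePlane (n d : ℕ) (P : Set (V n)) : Prop :=
  ∃ Q : AffineSubspace ℝ (V n), (Q : Set (V n)) = P ∧
    Module.finrank ℝ Q.direction = d ∧ (Q : Set (V n)).Nonempty

/-- The normalized local Hausdorff distance `d_{x,r}(A,B)`. -/
def nhd {n : ℕ} (x : V n) (r : ℝ) (A B : Set (V n)) : ℝ :=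
  r⁻¹ * max (⨆ y ∈ A ∩ ball x r, infDist y B) (⨆ y ∈ B ∩ ball x r, infDist y A)

/-- `E` is a locally Ahlfors-regular Reifenberg-flat (LARRF) set of dimension `d`
with constants `ε` and `C₀` (Definition 15.1). -/
def IsLARRF (n d : ℕ) (ε C₀ : ℝ) (E : Set (V n)) : Prop :=
  E.Nonempty ∧ IsClosed E ∧
  ∀ x ∈ E, ∀ r : ℝ, 0 < r → r ≤ 1 →
    (∃ P : Set (V n), IsAffinePlane n d P ∧ x ∈ P ∧ nhd x r P E ≤ ε) ∧
    ENNReal.ofReal (C₀⁻¹ * r ^ d) ≤ μH[(d : ℝ)] (E ∩ ball x r) ∧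
    μH[(d : ℝ)] (E ∩ ball x r) ≤ ENNReal.ofReal (C₀ * r ^ d)

/-!
At scale `r`, projecting `E` to an approximating plane gives `1`-Lipschitz coordinates `π : E → ℝᵈ`.
Since `E` is flat at all scales, it contains a continuous approximate copy of a plane ball, so the
no-retraction theorem shows that `E` cannot be pushed off a ball of `ℝᵈ`: it is essential over it.
An essential set covers the ball, and splitting it into clusters, the classes of points joined by
chains with short steps, leaves at least one cluster essential. Thus one can follow nested essential
clusters down the tree of dyadic cubes, and the limits of the branches form a section of `π`.

The section is Lipschitz between two points if the clusters selected at their common scale meet and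
have diameter comparable to the scale. Large clusters force, by lower regularity, a large density of
`E` over the cube, which the maximal inequality excludes off a set of small measure. Two points of
adjacent cubes can select different clusters only if the cluster of some ancestor contains several
essential clusters; each of them covers the cube, so such an ambiguity costs mass, upper regularity
makes the total volume of the ambiguous cubes bounded, and the points near the boundaries of these
cubes form a set of small measure. On the remaining half of the cube the section is Lipschitz, and
an extension of it has the required graph.
-/

/-! ### Maps that are the identity off a bounded set -/

open Polynomial in
lemma exists_finset_eval_eq_sum {K : Type*} [Field K] {S : Set K} (hS : S.Infinite) (N : ℕ)
    (x : K) : ∃ (T : Finset K) (w : K → K), ↑T ⊆ S ∧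
      ∀ p : K[X], p.natDegree ≤ N → p.eval x = ∑ t ∈ T, w t * p.eval t := by
  classical
  obtain ⟨T, hTS, hT⟩ := hS.exists_subset_card_eq (N + 1)
  refine ⟨T, fun t => (Lagrange.basis T id t).eval x, hTS, fun p hp => ?_⟩
  have hdeg : p.degree < T.card :=
    degree_le_natDegree.trans_lt (by rw [hT]; exact_mod_cast Nat.lt_succ_of_le hp)
  conv_lhs => rw [Lagrange.eq_interpolate (v := id) (injOn_id _) hdeg]
  simp only [Lagrange.interpolate_apply, eval_finsetSum, eval_mul, eval_C, id, mul_comm]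

open Polynomial in
lemma exists_polynomial_eval_eq_det_one_add_smul {R E : Type*} [CommRing R] [Nontrivial R]
    [AddCommGroup E] [Module R E] [Module.Free R E] [Module.Finite R E] (A : Module.End R E) :
    ∃ p : R[X], p.natDegree ≤ Module.finrank R E ∧
      ∀ s, p.eval s = LinearMap.det (1 + s • A) := by
  let b := Module.finBasis R E
  obtain ⟨M, hM⟩ : ∃ M, LinearMap.toMatrix b b A = M := ⟨_, rfl⟩
  refine ⟨((X : R[X]) • M.map C + Matrix.map 1 C).det, ?_, fun s => ?_⟩
  · simpa using natDegree_det_X_add_C_le M 1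
  · rw [← LinearMap.det_toMatrix b, map_add, map_smul, LinearMap.toMatrix_one,
      hM, ← coe_evalRingHom, RingHom.map_det]
    congr 1
    ext i j
    by_cases hij : i = j <;> simp [hij, mul_comm s, add_comm (1 : R)]

lemma bijective_id_add {E : Type*} [NormedAddCommGroup E] [NormedSpace ℝ E] [CompleteSpace E]
    {g : E → E} {K : NNReal} (hg : LipschitzWith K g) (hK : K < 1) :
    Function.Bijective fun x => x + g x := by
  rcases subsingleton_or_nontrivial E with _ | _
  · exact ⟨Function.injective_of_subsingleton _, Function.surjective_to_subsingleton _⟩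
  have happ : ApproximatesLinearOn (fun x => x + g x) (ContinuousLinearEquiv.refl ℝ E : E →L[ℝ] E)
      univ K := by
    rw [ApproximatesLinearOn.approximatesLinearOn_iff_lipschitzOnWith, lipschitzOnWith_univ]
    convert hg using 1
    ext x
    simp
  have hN : Subsingleton E ∨ K < ‖((ContinuousLinearEquiv.refl ℝ E).symm : E →L[ℝ] E)‖₊⁻¹ := by
    simpa using Or.inr hK
  exact ⟨injOn_univ.1 (happ.injOn hN), happ.surjective hN⟩

section NormedSpace

variable {E : Type*} [NormedAddCommGroup E] [NormedSpace ℝ E]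

lemma exists_forall_det_one_add_pos (E : Type*) [NormedAddCommGroup E] [NormedSpace ℝ E] :
    ∃ δ > 0, ∀ A : E →L[ℝ] E, ‖A‖ < δ → 0 < (1 + A).det := by
  have hc : Continuous fun A : E →L[ℝ] E => (1 + A).det :=
    ContinuousLinearMap.continuous_det.comp (continuous_const.add continuous_id)
  have h0 : {A : E →L[ℝ] E | 0 < (1 + A).det} ∈ nhds 0 :=
    (isOpen_lt continuous_const hc).mem_nhds (by simp [ContinuousLinearMap.det])
  obtain ⟨δ, hδ, h⟩ := Metric.mem_nhds_iff.1 h0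
  exact ⟨δ, hδ, fun A hA => h (by simpa using hA)⟩

variable [FiniteDimensional ℝ E] [MeasurableSpace E] [BorelSpace E] (μ : Measure E)
  [μ.IsAddHaarMeasure] {g : E → E} {U : Set E}

lemma setIntegral_det_one_add_smul_fderiv (hg : ContDiff ℝ 1 g) {t δ : ℝ} {L : NNReal}
    (hL : LipschitzWith L g) (ht : 0 < t) (htL : t * L < 1) (htδ : t * L < δ)
    (hδ : ∀ A : E →L[ℝ] E, ‖A‖ < δ → 0 < (1 + A).det)
    (hU : MeasurableSet U) (hgU : ∀ x, x + t • g x ∈ U ↔ x ∈ U) :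
    ∫ x in U, (1 + t • fderiv ℝ g x).det ∂μ = μ.real U := by
  let f : E → E := fun x => x + t • g x
  have hf : Function.Bijective f := by
    refine bijective_id_add (K := ‖t‖₊ * L) ((lipschitzWith_smul t).comp hL) ?_
    rw [← NNReal.coe_lt_coe]
    simpa [abs_of_pos ht] using htL
  have himage : f '' U = U := by
    conv_lhs => rw [← show f ⁻¹' U = U from ext hgU]
    exact image_preimage_eq U hf.surjective
  have hf' : ∀ x ∈ U, HasFDerivWithinAt f (1 + t • fderiv ℝ g x) U x := fun x _ =>
    ((hasFDerivAt_id x).add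
      ((hg.differentiable one_ne_zero x).hasFDerivAt.const_smul t)).hasFDerivWithinAt
  have hpos : ∀ x, 0 < (1 + t • fderiv ℝ g x).det := fun x => hδ _ <| by
    calc ‖t • fderiv ℝ g x‖ = t * ‖fderiv ℝ g x‖ := by rw [norm_smul, Real.norm_of_nonneg ht.le]
      _ ≤ t * L := by gcongr; exact norm_fderiv_le_of_lipschitz ℝ hL
      _ < δ := htδ
  calc ∫ x in U, (1 + t • fderiv ℝ g x).det ∂μ
      = ∫ x in U, |(1 + t • fderiv ℝ g x).det| • (1 : ℝ) ∂μ := by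
        simp only [abs_of_pos (hpos _), smul_eq_mul, mul_one]
    _ = ∫ _ in f '' U, (1 : ℝ) ∂μ :=
        (integral_image_eq_integral_abs_det_fderiv_smul μ hU hf' hf.injective.injOn fun _ => 1).symm
    _ = μ.real U := by simp [himage]

/-- The left-hand side with `g` replaced by `t • g` is a polynomial in `t`, so its value at
`t = 1` is determined by small `t`, for which the change of variables formula applies. -/
lemma setIntegral_det_one_add_fderiv (hg : ContDiff ℝ 1 g) {τ : ℝ} {L : NNReal}
    (hL : LipschitzWith L g) (hU : MeasurableSet U) (hUb : Bornology.IsBounded U) (hτ : 0 < τ)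
    (hgU : ∀ t ∈ Ioo 0 τ, ∀ x, x + t • g x ∈ U ↔ x ∈ U) :
    ∫ x in U, (1 + fderiv ℝ g x).det ∂μ = μ.real U := by
  obtain ⟨δ, hδ, hdet⟩ := exists_forall_det_one_add_pos E
  have hσ : 0 < min τ (min δ 1 / (L + 1)) := by positivity
  obtain ⟨T, w, hT, hw⟩ :=
    exists_finset_eval_eq_sum (Ioo_infinite hσ) (Module.finrank ℝ E) 1
  have hsmall : ∀ t ∈ T, ∫ x in U, (1 + t • fderiv ℝ g x).det ∂μ = μ.real U := fun t ht => by
    obtain ⟨ht0, htσ⟩ := hT ht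
    obtain ⟨htτ, htL⟩ := lt_min_iff.1 htσ
    rw [lt_div_iff₀ (by positivity), lt_min_iff] at htL
    exact setIntegral_det_one_add_smul_fderiv μ hg hL ht0 (by linarith) (by linarith) hdet hU
      (hgU t ⟨ht0, htτ⟩)
  have hwsum : ∑ t ∈ T, w t = 1 := by simpa using (hw 1 (by simp)).symm
  have hsum : ∀ A : E →L[ℝ] E, (1 + A).det = ∑ t ∈ T, w t * (1 + t • A).det := fun A => by
    obtain ⟨p, hp, hpA⟩ := exists_polynomial_eval_eq_det_one_add_smul (A : E →ₗ[ℝ] E)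
    simpa [hpA, ContinuousLinearMap.det] using hw p hp
  have hInt : ∀ t ∈ T, IntegrableOn (fun x => w t * (1 + t • fderiv ℝ g x).det) U μ :=
    fun t _ => by
      have hc : Continuous fun x => w t * (1 + t • fderiv ℝ g x).det :=
        continuous_const.mul (ContinuousLinearMap.continuous_det.comp
          (continuous_const.add ((hg.continuous_fderiv one_ne_zero).const_smul t)))
      exact (hc.continuousOn.integrableOn_compact hUb.isCompact_closure).mono_set subset_closure
  calc ∫ x in U, (1 + fderiv ℝ g x).det ∂μ
      = ∑ t ∈ T, w t * ∫ x in U, (1 + t • fderiv ℝ g x).det ∂μ := by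
        rw [integral_congr_ae (.of_forall fun x => hsum (fderiv ℝ g x)), integral_finsetSum _ hInt]
        simp only [integral_const_mul]
    _ = ∑ t ∈ T, w t * μ.real U := Finset.sum_congr rfl fun t ht => by rw [hsmall t ht]
    _ = μ.real U := by rw [← Finset.sum_mul, hwsum, one_mul]

end NormedSpace

lemma add_smul_sub_mem_ball_zero_iff {E : Type*} [NormedAddCommGroup E] [NormedSpace ℝ E]
    {x k : E} {R s : ℝ} (hs : s ∈ Ico 0 1) (hk : ‖k‖ = R) (hray : R ≤ ‖x‖ → SameRay ℝ x k) :
    x + s • (k - x) ∈ ball 0 R ↔ x ∈ ball 0 R := by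
  obtain ⟨hs0, hs1⟩ := hs
  have hcomb : x + s • (k - x) = (1 - s) • x + s • k := by module
  have hsum : ‖(1 - s) • x‖ + ‖s • k‖ = (1 - s) * ‖x‖ + s * R := by
    rw [norm_smul, norm_smul, hk, Real.norm_of_nonneg hs0, Real.norm_of_nonneg (by linarith)]
  simp only [mem_ball_zero_iff, hcomb]
  rcases lt_or_ge ‖x‖ R with hx | hx
  · refine iff_of_true ((norm_add_le _ _).trans_lt ?_) hx
    rw [hsum]
    nlinarith
  · refine iff_of_false (not_lt.2 ?_) (not_lt.2 hx)
    rw [(((hray hx).nonneg_smul_left (by linarith)).nonneg_smul_right hs0).norm_add, hsum]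
    nlinarith

section InnerProductSpace

variable {E : Type*} [NormedAddCommGroup E] [InnerProductSpace ℝ E] [FiniteDimensional ℝ E]

lemma det_eq_zero_of_norm_eq_const {k : E → E} {A : E →L[ℝ] E} {x : E} {R : ℝ} (hR : R ≠ 0)
    (hA : HasFDerivAt k A x) (hk : ∀ y, ‖k y‖ = R) : A.det = 0 := by
  have hconst : HasFDerivAt (fun y => inner ℝ (k y) (k y)) (0 : E →L[ℝ] ℝ) x := by
    simp only [real_inner_self_eq_norm_sq, hk]
    exact hasFDerivAt_const _ _
  have horth : ∀ v, inner ℝ (k x) (A v) = 0 := fun v => by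
    have hv := DFunLike.congr_fun ((hA.inner ℝ hA).unique hconst) v
    simpa [real_inner_comm (k x) (A v)] using hv
  by_contra hne
  have hsurj : Function.Surjective A := ((Module.End.isUnit_iff (A : E →ₗ[ℝ] E)).1
    ((LinearMap.isUnit_iff_isUnit_det _).2 (isUnit_iff_ne_zero.2 hne))).2
  obtain ⟨v, hv⟩ := hsurj (k x)
  have hsq := horth v
  rw [hv, real_inner_self_eq_norm_sq, hk] at hsq
  exact hR (pow_eq_zero_iff two_ne_zero |>.1 hsq)

/-- Otherwise `x ↦ R h(x) / ‖h(x)‖` would be a `C¹` map into a sphere: its Jacobian vanishes, while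
that of the truncated displacement integrates to the volume of the ball. -/
lemma exists_eq_zero_of_contDiff {h : E → E} {R : ℝ} (hR : 0 < R) (hh : ContDiff ℝ 1 h)
    (hid : ∀ x, R ≤ ‖x‖ → h x = x) : ∃ x, h x = 0 := by
  by_contra! h0
  let : MeasurableSpace E := borel E
  have : BorelSpace E := ⟨rfl⟩
  let μ : Measure E := Measure.addHaar
  let k : E → E := fun x => (R / ‖h x‖) • h x
  have hk : ContDiff ℝ 1 k :=
    (contDiff_const.div (hh.norm ℝ h0) fun x => norm_ne_zero_iff.2 (h0 x)).smul hh
  have hkR : ∀ x, ‖k x‖ = R := fun x => by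
    rw [norm_smul, norm_div, norm_norm, Real.norm_of_nonneg hR.le,
      div_mul_cancel₀ _ (norm_ne_zero_iff.2 (h0 x))]
  have hray : ∀ x, R ≤ ‖x‖ → SameRay ℝ x (k x) := fun x hx => by
    simp only [k, hid x hx]
    exact SameRay.sameRay_nonneg_smul_right x (by positivity)
  let χ : ContDiffBump (0 : E) := ⟨R, 2 * R, hR, by linarith⟩
  let g : E → E := fun x => χ x • (k x - x)
  have hg : ContDiff ℝ 1 g := χ.contDiff.smul (hk.sub contDiff_id)
  obtain ⟨L, hL⟩ := hg.lipschitzWith_of_hasCompactSupport χ.hasCompactSupport.smul_right one_ne_zero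
  have hvol : ∫ x in ball (0 : E) R, (1 + fderiv ℝ g x).det ∂μ = μ.real (ball 0 R) := by
    refine setIntegral_det_one_add_fderiv μ hg hL measurableSet_ball isBounded_ball one_pos
      fun t ht x => ?_
    rw [smul_smul]
    refine add_smul_sub_mem_ball_zero_iff ⟨mul_nonneg ht.1.le (χ.nonneg' x), ?_⟩ (hkR x) (hray x)
    exact (mul_le_of_le_one_right ht.1.le χ.le_one).trans_lt ht.2
  have hdet : ∀ x ∈ ball (0 : E) R, (1 + fderiv ℝ g x).det = 0 := fun x hx => by
    have hsum : HasFDerivAt (fun y => y + g y) (1 + fderiv ℝ g x) x :=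
      (hasFDerivAt_id x).add (hg.differentiable one_ne_zero x).hasFDerivAt
    refine det_eq_zero_of_norm_eq_const hR.ne' (hsum.congr_of_eventuallyEq ?_) hkR
    filter_upwards [isOpen_ball.mem_nhds hx] with y hy
    simp [g, χ.one_of_mem_closedBall (ball_subset_closedBall hy)]
  rw [setIntegral_congr_fun measurableSet_ball hdet, integral_zero] at hvol
  exact (ENNReal.toReal_pos (measure_ball_pos μ 0 hR).ne' measure_ball_lt_top.ne).ne hvol

open scoped Manifold ContDiff in
lemma exists_contDiff_dist_lt_and_eq_id {h : E → E} {R δ : ℝ} (hh : Continuous h)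
    (hid : ∀ x, R ≤ ‖x‖ → h x = x) (hδ : 0 < δ) {R' : ℝ} (hR : R < R') :
    ∃ g : E → E, ContDiff ℝ 1 g ∧ (∀ x, dist (g x) (h x) < δ) ∧ ∀ x, R' ≤ ‖x‖ → g x = x := by
  let t : E → Set E := fun x => {y | dist y (h x) < δ ∧ (R' ≤ ‖x‖ → y = x)}
  have hconvex : ∀ x, Convex ℝ (t x) := fun x => by
    by_cases hx : R' ≤ ‖x‖
    · refine Set.Subsingleton.convex fun y hy z hz => ?_
      exact (hy.2 hx).trans (hz.2 hx).symm
    · simp only [t, hx, false_imp_iff, and_true]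
      exact convex_ball (h x) δ
  obtain ⟨g, hg⟩ := exists_contMDiffMap_forall_mem_convex_of_local (n := 1) 𝓘(ℝ, E) hconvex
    fun x => by
      rcases lt_or_ge R ‖x‖ with hx | hx
      · refine ⟨{y | R < ‖y‖}, (isOpen_lt continuous_const continuous_norm).mem_nhds hx, id,
          contMDiffOn_id, fun y hy => ⟨?_, fun _ => rfl⟩⟩
        rwa [hid y (le_of_lt hy), id, dist_self]
      · have hnear : ∀ᶠ y in nhds x, dist (h x) (h y) < δ :=
          (isOpen_lt (continuous_const.dist hh) continuous_const).mem_nhds (by simpa using hδ)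
        have hin : ∀ᶠ y in nhds x, ‖y‖ < R' :=
          (isOpen_lt continuous_norm continuous_const).mem_nhds (hx.trans_lt hR)
        exact ⟨_, hnear.and hin, fun _ => h x, contMDiffOn_const,
          fun y hy => ⟨hy.1, fun hy' => absurd hy' (not_le.2 hy.2)⟩⟩
  exact ⟨g, g.contMDiff.contDiff, fun x => (hg x).1, fun x => (hg x).2⟩

lemma exists_eq_zero_of_continuous {h : E → E} {R : ℝ} (hR : 0 < R) (hh : Continuous h)
    (hid : ∀ x, R ≤ ‖x‖ → h x = x) : ∃ x, h x = 0 := by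
  by_contra! h0
  obtain ⟨z, hz⟩ : ∃ z, ∀ x ∈ closedBall (0 : E) (2 * R), ‖h z‖ ≤ ‖h x‖ := by
    obtain ⟨z, _, hz⟩ := (isCompact_closedBall (0 : E) (2 * R)).exists_isMinOn
      ⟨0, by simp [hR.le]⟩ hh.norm.continuousOn
    exact ⟨z, fun x hx => hz hx⟩
  obtain ⟨g, hg, hgh, hgid⟩ := exists_contDiff_dist_lt_and_eq_id hh hid (norm_pos_iff.2 (h0 z))
    (show R < 2 * R by linarith)
  obtain ⟨x, hx⟩ := exists_eq_zero_of_contDiff (by positivity) hg hgid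
  rcases le_total (2 * R) ‖x‖ with hxR | hxR
  · rw [← hgid x hxR, hx, norm_zero] at hxR
    linarith
  · have hlt := hgh x
    rw [hx, dist_zero_left] at hlt
    exact (hz x (by simpa using hxR)).not_gt hlt

end InnerProductSpace

theorem surjective_of_isBounded_ne {E : Type*} [NormedAddCommGroup E] [NormedSpace ℝ E]
    [FiniteDimensional ℝ E] {h : E → E} (hh : Continuous h)
    (hb : Bornology.IsBounded {x | h x ≠ x}) : Function.Surjective h := by
  intro q
  let e : E ≃L[ℝ] EuclideanSpace ℝ (Fin (Module.finrank ℝ E)) := toEuclidean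
  let f : EuclideanSpace ℝ (Fin (Module.finrank ℝ E)) → EuclideanSpace ℝ _ :=
    fun v => e (h (e.symm v + q) - q)
  obtain ⟨R, hR⟩ := (e.lipschitz.isBounded_image
    ((LipschitzWith.id.sub (LipschitzWith.const q)).isBounded_image hb)).subset_closedBall 0
  obtain ⟨v, hv⟩ := exists_eq_zero_of_continuous (h := f) (R := max R 0 + 1) (by positivity)
    (by fun_prop) fun v hv => by
      have hfix : h (e.symm v + q) = e.symm v + q := by
        by_contra hne
        have hmem : v ∈ closedBall 0 R := hR ⟨e.symm v, ⟨e.symm v + q, hne, by simp⟩, by simp⟩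
        rw [mem_closedBall_zero_iff] at hmem
        linarith [le_max_left R 0]
      simp [f, hfix]
  exact ⟨e.symm v + q, by simpa [f, sub_eq_zero] using hv⟩

/-! ### Inessential sets -/

section Inessential

open scoped Pointwise in
lemma exists_retraction_compl {P : Type*} [NormedAddCommGroup P] [NormedSpace ℝ P] {U : Set P}
    {b : P} (hUo : IsOpen U) (hUc : Convex ℝ U) (hUb : Bornology.IsBounded U) (hb : b ∈ U) :
    ∃ R : P → P, ContinuousOn R {b}ᶜ ∧ MapsTo R {b}ᶜ Uᶜ ∧ EqOn R id Uᶜ := by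
  set W : Set P := -b +ᵥ U
  have hW : ∀ y, y - b ∈ W ↔ y ∈ U := fun y => by simp [W, mem_vadd_set_iff_neg_vadd_mem]
  have hWc : Convex ℝ W := hUc.vadd _
  have hWo : IsOpen W := hUo.vadd _
  have hW0 : (0 : P) ∈ W := by simpa using (hW b).2 hb
  have hWn : W ∈ nhds (0 : P) := hWo.mem_nhds hW0
  have hpos : ∀ y ≠ b, 0 < gauge W (y - b) := fun y hy =>
    (gauge_pos (absorbent_nhds_zero hWn) ((NormedSpace.isVonNBounded_iff ℝ).2 (hUb.vadd _))).2
      (sub_ne_zero.2 hy)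
  have hlt : ∀ y, gauge W (y - b) < 1 ↔ y ∈ U := fun y => by
    rw [← hW, ← mem_ofPred_eq (p := fun x => gauge W x < 1),
      setOfPred_gauge_lt_one_eq_self_of_isOpen hWc hW0 hWo]
  refine ⟨fun y => b + max 1 (gauge W (y - b))⁻¹ • (y - b), ?_, fun y hy => ?_, fun y hy => ?_⟩
  · have hinv : ContinuousOn (fun y => (gauge W (y - b))⁻¹) {b}ᶜ :=
      ((continuous_gauge hWc hWn).comp (continuous_id.sub continuous_const)).continuousOn.inv₀
        fun y hy => (hpos y hy).ne'
    fun_prop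
  · rw [mem_compl_iff, ← hlt, add_sub_cancel_left, gauge_smul_of_nonneg (by positivity),
      smul_eq_mul, not_lt]
    calc (1 : ℝ) = (gauge W (y - b))⁻¹ * gauge W (y - b) := (inv_mul_cancel₀ (hpos y hy).ne').symm
      _ ≤ max 1 (gauge W (y - b))⁻¹ * gauge W (y - b) :=
        mul_le_mul_of_nonneg_right (le_max_right _ _) (hpos y hy).le
  · rw [mem_compl_iff, ← hlt, not_lt] at hy
    have hmax : max 1 (gauge W (y - b))⁻¹ = 1 := max_eq_left (inv_le_one_of_one_le₀ hy)
    simp [hmax]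

variable {X : Type*} [TopologicalSpace X] {P : Type*}

/-- `K` is inessential over `U` if `π` can be modified on `K`, at the points it sends into `U` only,
so that its image avoids `U`. -/
def Inessential [TopologicalSpace P] (π : X → P) (K : Set X) (U : Set P) : Prop :=
  ∃ g : X → P, ContinuousOn g K ∧ MapsTo g K Uᶜ ∧ EqOn g π (K \ π ⁻¹' U)

variable [NormedAddCommGroup P] [NormedSpace ℝ P] {π g : X → P} {K : Set X} {U U' : Set P}

lemma Inessential.of_notMem_image {b : P} (hUo : IsOpen U) (hUc : Convex ℝ U)
    (hUb : Bornology.IsBounded U) (hb : b ∈ U) (hg : ContinuousOn g K) (hgb : b ∉ g '' K)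
    (hgπ : EqOn g π (K \ π ⁻¹' U)) : Inessential π K U := by
  obtain ⟨R, hR, hRU, hRid⟩ := exists_retraction_compl hUo hUc hUb hb
  have hgK : MapsTo g K {b}ᶜ := fun y hy hgy => hgb ⟨y, hy, hgy⟩
  refine ⟨R ∘ g, hR.comp hg hgK, hRU.comp hgK, fun y hy => ?_⟩
  rw [Function.comp_apply, hgπ hy]
  exact hRid hy.2

lemma Inessential.mono (hUo : IsOpen U) (hUc : Convex ℝ U) (hUb : Bornology.IsBounded U)
    (hU' : U'.Nonempty) (hUU' : U' ⊆ U) (h : Inessential π K U') : Inessential π K U := by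
  obtain ⟨g, hg, hgU, hgπ⟩ := h
  obtain ⟨b, hb⟩ := hU'
  refine .of_notMem_image hUo hUc hUb (hUU' hb) hg ?_
    (hgπ.mono (sdiff_subset_sdiff_right (preimage_mono hUU')))
  rintro ⟨y, hy, rfl⟩
  exact hgU hy hb

lemma subset_image_of_not_inessential (hUo : IsOpen U) (hUc : Convex ℝ U)
    (hUb : Bornology.IsBounded U) (hπ : ContinuousOn π K) (h : ¬ Inessential π K U) :
    U ⊆ π '' K := fun _ hb => by_contra fun hbK =>
  h (.of_notMem_image hUo hUc hUb hb hπ hbK fun _ _ => rfl)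

/-- If the image of the modified section missed the ball, cutting it off to the identity away from
the ball would contradict `surjective_of_isBounded_ne`. -/
theorem not_inessential_of_approximate_section [FiniteDimensional ℝ P] {s : P → X} {c : P}
    {ρ δ R : ℝ} (hs : ContinuousOn s (closedBall c R)) (hsK : MapsTo s (closedBall c R) K)
    (hsπ : ∀ p ∈ closedBall c R, dist (π (s p)) p ≤ δ) (hδ : 0 ≤ δ) (hρ : 0 < ρ)
    (hR : ρ + δ < R) : ¬ Inessential π K (ball c ρ) := by
  rintro ⟨g, hg, hgU, hgπ⟩
  have : TietzeExtension P := .of_tvs ℝ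
  obtain ⟨u, hu⟩ := ContinuousMap.exists_restrict_eq isClosed_closedBall
    ⟨(closedBall c R).domRestrict (g ∘ s), (hg.comp hs hsK).domRestrict⟩
  have hus : ∀ p ∈ closedBall c R, u p = g (s p) := fun p hp =>
    DFunLike.congr_fun hu ⟨p, hp⟩
  obtain ⟨χ, hχ0, hχ1, hχ⟩ := exists_continuous_zero_one_of_isClosed
    (isOpen_ball (x := c) (ε := R)).isClosed_compl (isClosed_closedBall (x := c) (ε := ρ + δ))
    (disjoint_compl_left_iff_subset.2 (closedBall_subset_ball hR))
  have hid : {p | p + χ p • (u p - p) ≠ p} ⊆ ball c R := fun p hp => by_contra fun hpR =>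
    hp (by simp [hχ0 hpR])
  obtain ⟨p, hp⟩ := surjective_of_isBounded_ne (h := fun p => p + χ p • (u p - p)) (by fun_prop)
    (isBounded_ball.subset hid) c
  have hpR : p ∈ closedBall c R := by
    by_contra hpR
    rw [show p = c by simpa [hχ0 fun h => hpR (ball_subset_closedBall h)] using hp] at hpR
    exact hpR (mem_closedBall_self (by linarith))
  rcases le_or_gt (dist p c) (ρ + δ) with hpρ | hpρ
  · have hgc : g (s p) = c := by simpa [hχ1 hpρ, hus p hpR] using hp
    exact hgU (hsK hpR) (hgc ▸ mem_ball_self hρ)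
  · have hπU : π (s p) ∉ ball c ρ := fun h => by
      linarith [mem_ball.1 h, dist_triangle_left p c (π (s p)), hsπ p hpR]
    have hup : dist (u p) p ≤ δ := by rw [hus p hpR, hgπ ⟨hsK hpR, hπU⟩]; exact hsπ p hpR
    have hle : dist p c ≤ dist (u p) p := by
      rw [dist_comm p c, ← hp, dist_eq_norm, dist_eq_norm, add_sub_cancel_left, norm_smul,
        Real.norm_of_nonneg (hχ p).1]
      exact mul_le_of_le_one_left (norm_nonneg _) (hχ p).2
    linarith

end Inessential

/-! ### Chain components and clusters -/

section ChainComponent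

variable {X : Type*} [PseudoMetricSpace X] {A A' : Set X} {t t' : ℝ} {y z u v : X}

/-- The points that can be reached from `y` by chains in `A` with steps shorter than `t`. -/
def chainComponent (A : Set X) (t : ℝ) (y : X) : Set X :=
  {z | Relation.ReflTransGen (fun u v => u ∈ A ∧ v ∈ A ∧ dist u v < t) y z}

lemma mem_chainComponent_self : y ∈ chainComponent A t y := Relation.ReflTransGen.refl

lemma chainComponent_subset (hy : y ∈ A) : chainComponent A t y ⊆ A := by
  intro z hz
  rcases Relation.ReflTransGen.cases_tail hz with rfl | ⟨_, _, hstep⟩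
  · exact hy
  · exact hstep.2.1

lemma chainComponent_eq_of_mem (h : z ∈ chainComponent A t y) :
    chainComponent A t z = chainComponent A t y := by
  have hs : Std.Symm (fun u v => u ∈ A ∧ v ∈ A ∧ dist u v < t) :=
    ⟨fun u v huv => ⟨huv.2.1, huv.1, dist_comm u v ▸ huv.2.2⟩⟩
  ext w
  exact ⟨fun hw => Relation.ReflTransGen.trans h hw,
    fun hw => Relation.ReflTransGen.trans (Std.Symm.symm _ _ h) hw⟩

lemma mem_chainComponent_of_dist_lt (hu : u ∈ chainComponent A t y) (huA : u ∈ A) (hv : v ∈ A)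
    (huv : dist u v < t) : v ∈ chainComponent A t y :=
  Relation.ReflTransGen.tail hu ⟨huA, hv, huv⟩

lemma chainComponent_subset_of_mem (hA : A' ⊆ A) (ht : t' ≤ t) (h : z ∈ chainComponent A t y) :
    chainComponent A' t' z ⊆ chainComponent A t y := by
  rw [← chainComponent_eq_of_mem h]
  exact fun _ hw => Relation.ReflTransGen.mono
    (fun _ _ huv => ⟨hA huv.1, hA huv.2.1, huv.2.2.trans_le ht⟩) _ _ hw

lemma isClosed_chainComponent (hA : IsClosed A) (ht : 0 < t) (hy : y ∈ A) :
    IsClosed (chainComponent A t y) := by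
  refine isClosed_of_closure_subset fun z hz => ?_
  have hzA : z ∈ A := hA.closure_subset_iff.2 (chainComponent_subset hy) hz
  obtain ⟨u, hu, hzu⟩ := Metric.mem_closure_iff.1 hz t ht
  exact mem_chainComponent_of_dist_lt hu (chainComponent_subset hy hu) hzA (by rwa [dist_comm])

lemma exists_dist_mem_Ico_of_mem_chainComponent {s : ℝ} (ht : 0 < t) (hs : 0 ≤ s) (hy : y ∈ A)
    (hu : u ∈ chainComponent A t y) (hsu : s ≤ dist y u) :
    ∃ a ∈ A, dist y a ∈ Ico s (s + t) := by
  induction hu with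
  | refl => exact ⟨y, hy, hsu, by rw [dist_self]; linarith⟩
  | @tail u v _ huv ih =>
    by_cases hsu' : s ≤ dist y u
    · exact ih hsu'
    · exact ⟨v, huv.2.1, hsu, by linarith [dist_triangle y u v, huv.2.2]⟩

lemma exists_separated_of_mem_chainComponent {N : ℕ} (ht : 0 < t) (hy : y ∈ A)
    (hu : u ∈ chainComponent A t y) (hN : 2 * t * N ≤ dist y u) :
    ∃ a : Fin (N + 1) → X, (∀ m, a m ∈ A) ∧ Pairwise fun m m' => t ≤ dist (a m) (a m') := by
  have hex : ∀ m : Fin (N + 1), ∃ a ∈ A, dist y a ∈ Ico (2 * t * m) (2 * t * m + t) := fun m => by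
    refine exists_dist_mem_Ico_of_mem_chainComponent ht (by positivity) hy hu (le_trans ?_ hN)
    have hm : (m : ℝ) ≤ N := by exact_mod_cast Nat.lt_succ_iff.1 m.2
    gcongr
  choose a haA ha using hex
  have hlt : ∀ m m', m < m' → t ≤ dist (a m) (a m') := fun m m' hmm' => by
    have hsucc : (m : ℝ) + 1 ≤ m' := by exact_mod_cast hmm'
    nlinarith [(ha m).2, (ha m').1, dist_triangle y (a m) (a m')]
  refine ⟨a, haA, fun m m' hne => ?_⟩
  rcases hne.lt_or_gt with hmm' | hmm'
  · exact hlt m m' hmm'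
  · exact dist_comm (a m) (a m') ▸ hlt m' m hmm'

variable [MeasurableSpace X] [OpensMeasurableSpace X] {μ : Measure X} {T : Set X} {κ : ℝ≥0∞}

lemma card_mul_le_measure_of_separated {ι : Type*} [Fintype ι] {a : ι → X}
    (hT : MeasurableSet T) (ha : Pairwise fun i j => t ≤ dist (a i) (a j))
    (hκ : ∀ i, κ ≤ μ (T ∩ ball (a i) (t / 2))) : Fintype.card ι * κ ≤ μ T := by
  have hdisj : Pairwise (Function.onFun Disjoint fun i => T ∩ ball (a i) (t / 2)) :=
    fun i j hij => (ball_disjoint_ball (by linarith [ha hij])).mono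
      inter_subset_right inter_subset_right
  calc Fintype.card ι * κ = ∑ _i : ι, κ := by simp
    _ ≤ ∑ i, μ (T ∩ ball (a i) (t / 2)) := Finset.sum_le_sum fun i _ => hκ i
    _ = μ (⋃ i, T ∩ ball (a i) (t / 2)) := by
      rw [measure_iUnion hdisj fun i => hT.inter measurableSet_ball, tsum_fintype]
    _ ≤ μ T := measure_mono (iUnion_subset fun i => inter_subset_left)

lemma dist_lt_of_mem_chainComponent {N : ℕ} (hT : MeasurableSet T) (ht : 0 < t) (hy : y ∈ A)
    (hκ : ∀ a ∈ A, κ ≤ μ (T ∩ ball a (t / 2))) (hN : μ T < (N + 1) * κ)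
    (hu : u ∈ chainComponent A t y) : dist y u < 2 * t * N := by
  by_contra! hfar
  obtain ⟨a, haA, ha⟩ := exists_separated_of_mem_chainComponent ht hy hu hfar
  refine hN.not_ge ?_
  simpa using card_mul_le_measure_of_separated hT ha fun m => hκ _ (haA m)

end ChainComponent

section Cluster

variable {X : Type*} {P : Type*}

/-- The part of `S` lying over a closed ball. -/
def slab [PseudoMetricSpace P] (π : X → P) (S : Set X) (c : P) (ρ : ℝ) : Set X :=
  S ∩ π ⁻¹' closedBall c ρ

lemma slab_mono [PseudoMetricSpace P] {π : X → P} {S : Set X} {c c' : P} {ρ ρ' : ℝ}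
    (h : dist c' c + ρ' ≤ ρ) : slab π S c' ρ' ⊆ slab π S c ρ :=
  inter_subset_inter_right _ (preimage_mono (closedBall_subset_closedBall' (by linarith)))

variable [PseudoMetricSpace X]

lemma continuousOn_of_forall_chainComponent [TopologicalSpace P] {A K : Set X} {t : ℝ}
    {γ : Set X → X → P} (ht : 0 < t) (hKA : K ⊆ A)
    (hγ : ∀ y ∈ K, ContinuousOn (γ (chainComponent A t y)) (chainComponent A t y)) :
    ContinuousOn (fun y => γ (chainComponent A t y) y) K := by
  intro y hy
  have hnear : K ∩ ball y t ⊆ chainComponent A t y := fun w hw =>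
    mem_chainComponent_of_dist_lt mem_chainComponent_self (hKA hy) (hKA hw.1)
      (by rw [dist_comm]; exact hw.2)
  refine (continuousWithinAt_inter (ball_mem_nhds y ht)).1 ?_
  exact ((hγ y hy y mem_chainComponent_self).mono hnear).congr
    (fun w hw => by rw [chainComponent_eq_of_mem (hnear hw)]) rfl

lemma Inessential.of_forall_chainComponent [TopologicalSpace P] {π : X → P} {A K : Set X}
    {U B : Set P} {t : ℝ} (hπ : Continuous π) (hU : IsOpen U) (hB : IsClosed B) (hUB : U ⊆ B)
    (hK : IsClosed K) (hKA : K ∩ π ⁻¹' B ⊆ A) (ht : 0 < t)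
    (h : ∀ z ∈ K ∩ π ⁻¹' B, Inessential π (chainComponent A t z) U) : Inessential π K U := by
  classical
  have : Nonempty (X → P) := ⟨π⟩
  choose! γ hγc hγU hγπ using fun (C : Set X) (hC : Inessential π C U) => hC
  let g : X → P := fun y => if π y ∈ B then γ (chainComponent A t y) y else π y
  have hgin : ∀ y, π y ∈ B → g y = γ (chainComponent A t y) y := fun y hy => if_pos hy
  have hgout : ∀ y, π y ∉ B → g y = π y := fun y hy => if_neg hy
  have hgπ : EqOn g π (K \ π ⁻¹' U) := fun y hy => by
    by_cases hyB : π y ∈ B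
    · rw [hgin y hyB]
      exact hγπ _ (h y ⟨hy.1, hyB⟩) ⟨mem_chainComponent_self, hy.2⟩
    · exact hgout y hyB
  refine ⟨g, ?_, fun y hy => ?_, hgπ⟩
  · have hsplit : K ⊆ (K ∩ π ⁻¹' B) ∪ (K \ π ⁻¹' U) := fun y hy =>
      (em (π y ∈ B)).imp (fun hyB => ⟨hy, hyB⟩) fun hyB => ⟨hy, fun hyU => hyB (hUB hyU)⟩
    refine (ContinuousOn.union_of_isClosed ?_ (hπ.continuousOn.congr hgπ)
      (hK.inter (hB.preimage hπ)) (hK.inter (hU.preimage hπ).isClosed_compl)).mono hsplit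
    exact (continuousOn_of_forall_chainComponent (γ := γ) ht hKA fun y hy => hγc _ (h y hy)).congr
      fun y hy => hgin y hy.2
  · by_cases hyB : π y ∈ B
    · rw [hgin y hyB]
      exact hγU _ (h y ⟨hy, hyB⟩) mem_chainComponent_self
    · rw [hgout y hyB]
      exact fun hyU => hyB (hUB hyU)

/-- The chain component of `z` in the part of `S` lying over a closed ball. -/
def cluster [PseudoMetricSpace P] (π : X → P) (S : Set X) (c : P) (ρ t : ℝ) (z : X) : Set X :=
  chainComponent (slab π S c ρ) t z

/-- The cluster of `z` cannot be pushed off the open ball over which it lies. -/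
def IsEssential [PseudoMetricSpace P] (π : X → P) (S : Set X) (c : P) (ρ t : ℝ) (z : X) : Prop :=
  z ∈ slab π S c ρ ∧ ¬ Inessential π (cluster π S c ρ t z) (ball c ρ)

section PseudoMetricSpace

variable [PseudoMetricSpace P] {π : X → P} {S : Set X} {c c' : P} {ρ ρ' t t' : ℝ} {y z : X}

lemma isClosed_slab (hπ : Continuous π) (hS : IsClosed S) : IsClosed (slab π S c ρ) :=
  hS.inter (isClosed_closedBall.preimage hπ)

lemma cluster_subset_of_mem (h : dist c' c + ρ' ≤ ρ) (ht : t' ≤ t)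
    (hz : z ∈ cluster π S c ρ t y) : cluster π S c' ρ' t' z ⊆ cluster π S c ρ t y :=
  chainComponent_subset_of_mem (slab_mono h) ht hz

end PseudoMetricSpace

variable [NormedAddCommGroup P] [NormedSpace ℝ P] {π : X → P} {K S : Set X} {c c' : P}
  {ρ ρ' t t' : ℝ} {y : X}

lemma exists_isEssential (hπ : Continuous π) (hK : IsClosed K) (hKS : K ⊆ S) (ht : 0 < t)
    (hρ : 0 < ρ') (hb : dist c' c + ρ' ≤ ρ) (hess : ¬ Inessential π K (ball c ρ)) :
    ∃ z ∈ K, IsEssential π S c' ρ' t z := by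
  by_contra! hno
  refine hess (.mono isOpen_ball (convex_ball c ρ) isBounded_ball (nonempty_ball.2 hρ)
    (ball_subset_ball' (by linarith)) ?_)
  refine .of_forall_chainComponent (A := slab π S c' ρ') hπ isOpen_ball isClosed_closedBall
    ball_subset_closedBall hK (inter_subset_inter_left _ hKS) ht fun z hz => ?_
  by_contra hz'
  exact hno z hz.1 ⟨⟨hKS hz.1, hz.2⟩, hz'⟩

lemma IsEssential.exists_mem_cluster (hπ : Continuous π) (hS : IsClosed S)
    (h : IsEssential π S c ρ t y) (ht' : 0 < t') (htt : t' ≤ t) (hρ : 0 < ρ')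
    (hb : dist c' c + ρ' ≤ ρ) : ∃ z ∈ cluster π S c ρ t y, IsEssential π S c' ρ' t' z :=
  exists_isEssential hπ
    (isClosed_chainComponent (isClosed_slab hπ hS) (ht'.trans_le htt) h.1)
    ((chainComponent_subset h.1).trans inter_subset_left) ht' hρ hb h.2

end Cluster

/-! ### Dyadic cubes -/

section Dyadic

variable {d : ℕ} {ℓ η : ℝ} {i : ℕ} {p q : Fin d → ℝ} {k : Fin d → ℤ}

/-- The side length of the dyadic cubes of generation `i`, those of generation `0` having side
length `ℓ`. -/
def dyadicScale (ℓ : ℝ) (i : ℕ) : ℝ := ℓ / 2 ^ i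

/-- The index of the half-open dyadic cube of generation `i` containing `p`. -/
def cubeIndex (ℓ : ℝ) (i : ℕ) (p : Fin d → ℝ) : Fin d → ℤ := fun j => ⌊p j / dyadicScale ℓ i⌋

/-- The index of the dyadic cube that contains, one generation earlier, the cube of index `k`. -/
def parentIndex (k : Fin d → ℤ) : Fin d → ℤ := fun j => k j / 2

/-- The half-open dyadic cube of generation `i` and index `k`. -/
def dyadicCube (ℓ : ℝ) (i : ℕ) (k : Fin d → ℤ) : Set (Fin d → ℝ) := cubeIndex ℓ i ⁻¹' {k}

/-- The center of the dyadic cube of generation `i` and index `k`. -/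
def cubeCenter (ℓ : ℝ) (i : ℕ) (k : Fin d → ℤ) : Fin d → ℝ :=
  fun j => (k j + 1 / 2) * dyadicScale ℓ i

/-- The points of a dyadic cube whose distance to another cube is at most `η` times the side
length. -/
def boundaryLayer (ℓ η : ℝ) (i : ℕ) (k : Fin d → ℤ) : Set (Fin d → ℝ) :=
  {p ∈ dyadicCube ℓ i k | ∃ q ∉ dyadicCube ℓ i k, dist p q ≤ η * dyadicScale ℓ i}

lemma dyadicScale_zero : dyadicScale ℓ 0 = ℓ := by simp [dyadicScale]

lemma dyadicScale_succ : dyadicScale ℓ (i + 1) = dyadicScale ℓ i / 2 := by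
  rw [dyadicScale, dyadicScale, pow_succ, div_div]

lemma dyadicScale_pos (hℓ : 0 < ℓ) : 0 < dyadicScale ℓ i := by unfold dyadicScale; positivity

lemma dyadicScale_le (hℓ : 0 ≤ ℓ) : dyadicScale ℓ i ≤ ℓ :=
  div_le_self hℓ (one_le_pow₀ one_le_two)

lemma tendsto_dyadicScale : Filter.Tendsto (dyadicScale ℓ) Filter.atTop (nhds 0) :=
  Filter.Tendsto.const_div_atTop (tendsto_pow_atTop_atTop_of_one_lt one_lt_two) ℓ

lemma cubeIndex_eq_iff (hℓ : 0 < ℓ) : cubeIndex ℓ i p = k ↔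
    ∀ j, k j * dyadicScale ℓ i ≤ p j ∧ p j < k j * dyadicScale ℓ i + dyadicScale ℓ i := by
  have hs : 0 < dyadicScale ℓ i := dyadicScale_pos hℓ
  simp only [funext_iff, cubeIndex, Int.floor_eq_iff, le_div_iff₀ hs, div_lt_iff₀ hs, add_mul,
    one_mul]

lemma parentIndex_cubeIndex : parentIndex (cubeIndex ℓ (i + 1) p) = cubeIndex ℓ i p := by
  funext j
  have hdiv : p j / dyadicScale ℓ i = p j / dyadicScale ℓ (i + 1) / (2 : ℕ) := by
    rw [dyadicScale_succ, div_div]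
    congr 1
    push_cast
    ring
  simp only [parentIndex, cubeIndex, hdiv, Int.floor_div_natCast]
  rfl

lemma dist_cubeCenter_cubeIndex_le (hℓ : 0 < ℓ) :
    dist p (cubeCenter ℓ i (cubeIndex ℓ i p)) ≤ dyadicScale ℓ i / 2 := by
  refine (dist_pi_le_iff (half_pos (dyadicScale_pos hℓ)).le).2 fun j => ?_
  obtain ⟨hlow, hup⟩ := (cubeIndex_eq_iff hℓ).1 (Eq.refl (cubeIndex ℓ i p)) j
  rw [Real.dist_eq, abs_le, cubeCenter, add_mul]
  constructor <;> linarith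

lemma norm_le_dist_cubeCenter_add (hℓ : 0 < ℓ) (p : Fin d → ℝ) :
    ‖p‖ ≤ dist p (cubeCenter ℓ 0 0) + ℓ / 2 := by
  have h := dist_cubeCenter_cubeIndex_le hℓ (i := 0) (p := (0 : Fin d → ℝ))
  rw [dyadicScale_zero, show cubeIndex ℓ 0 (0 : Fin d → ℝ) = 0 by ext; simp [cubeIndex]] at h
  rw [← dist_zero_right]
  linarith [dist_triangle_right p 0 (cubeCenter ℓ 0 0)]

lemma dist_cubeCenter_cubeCenter_le (hℓ : 0 < ℓ) {i' : ℕ} :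
    dist (cubeCenter ℓ i (cubeIndex ℓ i p)) (cubeCenter ℓ i' (cubeIndex ℓ i' q)) ≤
      dyadicScale ℓ i / 2 + dist p q + dyadicScale ℓ i' / 2 := by
  have hp : dist p (cubeCenter ℓ i (cubeIndex ℓ i p)) ≤ _ := dist_cubeCenter_cubeIndex_le hℓ
  have hq : dist q (cubeCenter ℓ i' (cubeIndex ℓ i' q)) ≤ _ := dist_cubeCenter_cubeIndex_le hℓ
  rw [dist_comm] at hp
  linarith [dist_triangle4 (cubeCenter ℓ i (cubeIndex ℓ i p)) p q
    (cubeCenter ℓ i' (cubeIndex ℓ i' q))]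

lemma dyadicCube_eq_pi (hℓ : 0 < ℓ) : dyadicCube ℓ i k = Set.pi univ fun j =>
    Ico (k j * dyadicScale ℓ i) (k j * dyadicScale ℓ i + dyadicScale ℓ i) := by
  ext p
  simp [dyadicCube, cubeIndex_eq_iff hℓ]

lemma measurable_cubeIndex : Measurable (cubeIndex ℓ i : (Fin d → ℝ) → Fin d → ℤ) :=
  measurable_pi_lambda _ fun j => Int.measurable_floor.comp ((measurable_pi_apply j).div_const _)

lemma measurableSet_dyadicCube : MeasurableSet (dyadicCube ℓ i k) :=
  measurable_cubeIndex (measurableSet_singleton k)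

lemma volume_dyadicCube (hℓ : 0 < ℓ) :
    volume (dyadicCube ℓ i k) = ENNReal.ofReal (dyadicScale ℓ i ^ d) := by
  rw [dyadicCube_eq_pi hℓ, Real.volume_pi_Ico]
  simp [ENNReal.ofReal_pow (dyadicScale_pos hℓ).le]

lemma boundaryLayer_subset (hℓ : 0 < ℓ) : boundaryLayer ℓ η i k ⊆ dyadicCube ℓ i k \
    Set.pi univ fun j => Ico (k j * dyadicScale ℓ i + η * dyadicScale ℓ i)
      (k j * dyadicScale ℓ i + dyadicScale ℓ i - η * dyadicScale ℓ i) := by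
  rintro p ⟨hp, q, hq, hpq⟩
  refine ⟨hp, fun hpin => hq ((cubeIndex_eq_iff hℓ).2 fun j => ?_)⟩
  have hj := (dist_le_pi_dist p q j).trans hpq
  rw [Real.dist_eq, abs_le] at hj
  obtain ⟨hlow, hup⟩ := hpin j (mem_univ j)
  constructor <;> linarith

lemma volume_boundaryLayer_le (hℓ : 0 < ℓ) (hη : 0 ≤ η) (hη' : η ≤ 1 / 2) :
    volume (boundaryLayer ℓ η i k) ≤
      ENNReal.ofReal (2 * d * η) * volume (dyadicCube ℓ i k) := by
  have hs : 0 < dyadicScale ℓ i := dyadicScale_pos hℓ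
  set core := Set.pi univ fun j => Ico (k j * dyadicScale ℓ i + η * dyadicScale ℓ i)
    (k j * dyadicScale ℓ i + dyadicScale ℓ i - η * dyadicScale ℓ i) with hcore
  have hsub : core ⊆ dyadicCube ℓ i k := by
    rw [dyadicCube_eq_pi hℓ]
    exact Set.pi_mono fun j _ =>
      Ico_subset_Ico (by linarith [mul_nonneg hη hs.le]) (by linarith [mul_nonneg hη hs.le])
  have hvol : volume core = ENNReal.ofReal (((1 - 2 * η) * dyadicScale ℓ i) ^ d) := by
    have hside : ∀ a : ℝ, a + dyadicScale ℓ i - η * dyadicScale ℓ i - (a + η * dyadicScale ℓ i) =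
        (1 - 2 * η) * dyadicScale ℓ i := fun a => by ring
    rw [hcore, Real.volume_pi_Ico, ENNReal.ofReal_pow (mul_nonneg (by linarith) hs.le)]
    simp only [hside, Finset.prod_const, Finset.card_univ, Fintype.card_fin]
  have hbernoulli : 1 + d * (-(2 * η)) ≤ (1 - 2 * η) ^ d :=
    one_add_mul_le_pow (by linarith : -2 ≤ -(2 * η)) d
  calc volume (boundaryLayer ℓ η i k) ≤ volume (dyadicCube ℓ i k \ core) :=
        measure_mono (boundaryLayer_subset hℓ)
    _ = volume (dyadicCube ℓ i k) - volume core :=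
        measure_sdiff hsub (MeasurableSet.univ_pi fun _ => measurableSet_Ico).nullMeasurableSet
          (hvol ▸ ENNReal.ofReal_ne_top)
    _ ≤ ENNReal.ofReal (2 * d * η) * volume (dyadicCube ℓ i k) := by
        rw [hvol, volume_dyadicCube hℓ, ← ENNReal.ofReal_mul (by positivity),
          ← ENNReal.ofReal_sub _ (by positivity [show 0 ≤ 1 - 2 * η by linarith]), mul_pow]
        refine ENNReal.ofReal_le_ofReal ?_
        nlinarith [pow_pos hs d]

lemma volume_biUnion_boundaryLayer_le (hℓ : 0 < ℓ) (hη : 0 ≤ η) (hη' : η ≤ 1 / 2)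
    (I : Set (Fin d → ℤ)) : volume (⋃ k ∈ I, boundaryLayer ℓ η i k) ≤
      ENNReal.ofReal (2 * d * η) * volume (⋃ k ∈ I, dyadicCube ℓ i k) := by
  have hI : I.Countable := I.to_countable
  have hdisj : I.PairwiseDisjoint (dyadicCube ℓ i : (Fin d → ℤ) → Set (Fin d → ℝ)) :=
    fun k _ k' _ hkk' => (disjoint_singleton.2 hkk').preimage _
  calc volume (⋃ k ∈ I, boundaryLayer ℓ η i k)
      ≤ ∑' k : I, volume (boundaryLayer ℓ η i (k : Fin d → ℤ)) := measure_biUnion_le _ hI _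
    _ ≤ ∑' k : I, ENNReal.ofReal (2 * d * η) * volume (dyadicCube ℓ i (k : Fin d → ℤ)) :=
        ENNReal.tsum_le_tsum fun k => volume_boundaryLayer_le hℓ hη hη'
    _ = ENNReal.ofReal (2 * d * η) * volume (⋃ k ∈ I, dyadicCube ℓ i k) := by
        rw [ENNReal.tsum_mul_left, measure_biUnion hI hdisj fun k _ => measurableSet_dyadicCube]

end Dyadic

section Measure

lemma tsum_measure_sdiff_le {X : Type*} [MeasurableSpace X] {μ : Measure X} {T : ℕ → Set X}
    (hT : ∀ i, NullMeasurableSet (T i) μ) (hanti : Antitone T) (N : ℕ) :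
    ∑' i, μ (T i \ T (i + N)) ≤ N * μ (T 0) := by
  let D : ℕ → Set X := fun i => T i \ T (i + 1)
  have hdisj : Pairwise (Function.onFun Disjoint D) := (pairwise_disjoint_on D).2
    fun i j hij => disjoint_left.2 fun x hx hx' => hx.2 (hanti hij hx'.1)
  have hsum : ∀ j : ℕ, ∑' i, μ (D (i + j)) ≤ μ (T 0) := fun j => by
    rw [← measure_iUnion₀ (f := fun i => D (i + j))
      (fun a b hab => (hdisj (by omega)).aedisjoint) fun i => (hT _).diff (hT _)]
    exact measure_mono (iUnion_subset fun i => sdiff_subset.trans (hanti (Nat.zero_le _)))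
  have hcover : ∀ i n, T i \ T (i + n) ⊆ ⋃ j ∈ Finset.range n, D (i + j) := fun i n => by
    induction n with
    | zero => simp
    | succ n ih =>
      rw [Finset.range_add_one, Finset.set_biUnion_insert]
      intro x hx
      by_cases hxn : x ∈ T (i + n)
      · exact Or.inl ⟨hxn, hx.2⟩
      · exact Or.inr (ih ⟨hx.1, hxn⟩)
  calc ∑' i, μ (T i \ T (i + N)) ≤ ∑' i, ∑ j ∈ Finset.range N, μ (D (i + j)) :=
        ENNReal.tsum_le_tsum fun i =>
          (measure_mono (hcover i N)).trans (measure_biUnion_finset_le _ _)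
    _ = ∑ j ∈ Finset.range N, ∑' i, μ (D (i + j)) :=
        Summable.tsum_finsetSum fun _ _ => ENNReal.summable
    _ ≤ ∑ _j ∈ Finset.range N, μ (T 0) := Finset.sum_le_sum fun j _ => hsum j
    _ = N * μ (T 0) := by simp

lemma mul_addHaar_exists_mul_le_le {E ι : Type*} [NormedAddCommGroup E] [NormedSpace ℝ E]
    [FiniteDimensional ℝ E] [MeasurableSpace E] [BorelSpace E] (μ : Measure E)
    [μ.IsAddHaarMeasure] (ν : Measure E) {l : ℝ≥0∞} {R : ℝ} {r : ι → ℝ} (hr : ∀ i, 0 < r i)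
    (hrR : ∀ i, r i ≤ R) :
    l * μ {p | ∃ i, l * μ (closedBall p (r i)) ≤ ν (closedBall p (r i))} ≤
      4 ^ Module.finrank ℝ E * ν univ := by
  set Z := {p | ∃ i, l * μ (closedBall p (r i)) ≤ ν (closedBall p (r i))}
  choose! ρ hρ hρR hρν using show ∀ p ∈ Z, ∃ s > 0, s ≤ R ∧
      l * μ (closedBall p s) ≤ ν (closedBall p s) from
    fun p ⟨i, hi⟩ => ⟨r i, hr i, hrR i, hi⟩
  obtain ⟨u, huZ, hud, hu⟩ := Vitali.exists_disjoint_subfamily_covering_enlargement_closedBall Z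
    (fun p => p) ρ R hρR 4 (by norm_num)
  have huc : u.Countable := hud.countable_of_nonempty_interior fun p hp =>
    (nonempty_ball.2 (hρ p (huZ hp))).mono ball_subset_interior_closedBall
  have hcover : Z ⊆ ⋃ p ∈ u, closedBall p (4 * ρ p) := fun p hp => by
    obtain ⟨b, hb, hsub⟩ := hu p hp
    exact mem_biUnion hb (hsub (mem_closedBall_self (hρ p hp).le))
  calc l * μ Z ≤ l * ∑' p : u, μ (closedBall (p : E) (4 * ρ p)) := by
        gcongr; exact (measure_mono hcover).trans (measure_biUnion_le _ huc _)
    _ = ∑' p : u, 4 ^ Module.finrank ℝ E * (l * μ (closedBall (p : E) (ρ p))) := by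
        rw [← ENNReal.tsum_mul_left]
        refine tsum_congr fun p => ?_
        rw [Measure.addHaar_closedBall_mul μ _ (by norm_num) (hρ p (huZ p.2)).le,
          ← Measure.addHaar_closedBall_center μ (p : E), ENNReal.ofReal_pow (by norm_num),
          ENNReal.ofReal_ofNat, mul_left_comm]
    _ ≤ ∑' p : u, 4 ^ Module.finrank ℝ E * ν (closedBall (p : E) (ρ p)) :=
        ENNReal.tsum_le_tsum fun p => by gcongr; exact hρν p (huZ p.2)
    _ = 4 ^ Module.finrank ℝ E * ν (⋃ p ∈ u, closedBall p (ρ p)) := by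
        rw [ENNReal.tsum_mul_left, measure_biUnion huc hud
          fun p _ => isClosed_closedBall.measurableSet]
    _ ≤ 4 ^ Module.finrank ℝ E * ν univ := by gcongr; exact subset_univ _

end Measure

lemma dist_le_of_mem_slab {d : ℕ} {X : Type*} {π : X → Fin d → ℝ} {S : Set X} {ℓ : ℝ} {i : ℕ}
    {p : Fin d → ℝ} {y : X} (hℓ : 0 < ℓ)
    (hy : y ∈ slab π S (cubeCenter ℓ i (cubeIndex ℓ i p)) (6 * dyadicScale ℓ i)) :
    dist (π y) p ≤ 13 / 2 * dyadicScale ℓ i := by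
  have hcenter : dist p (cubeCenter ℓ i (cubeIndex ℓ i p)) ≤ _ := dist_cubeCenter_cubeIndex_le hℓ
  linarith [dist_triangle_right (π y) p (cubeCenter ℓ i (cubeIndex ℓ i p)), mem_closedBall.1 hy.2]

/-! ### Trees of essential clusters -/

section Tree

variable {d : ℕ} {X : Type*} [PseudoMetricSpace X] {π : X → Fin d → ℝ} {S : Set X} {ℓ α β : ℝ}
  {i : ℕ} {k : Fin d → ℤ} {Y : ℕ → (Fin d → ℤ) → X} {p q : Fin d → ℝ} {y z a b : X}

/-- The cluster of `z` over a ball of radius `α` side lengths around the center of the dyadic cube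
of generation `i` and index `k`. -/
def dyadicCluster (π : X → Fin d → ℝ) (S : Set X) (ℓ α : ℝ) (i : ℕ) (k : Fin d → ℤ) (z : X) :
    Set X :=
  cluster π S (cubeCenter ℓ i k) (α * dyadicScale ℓ i) (dyadicScale ℓ i) z

/-- The cluster `dyadicCluster π S ℓ α i k z` cannot be pushed off the ball over which it lies. -/
def IsDyadicEssential (π : X → Fin d → ℝ) (S : Set X) (ℓ α : ℝ) (i : ℕ) (k : Fin d → ℤ) (z : X) :
    Prop :=
  IsEssential π S (cubeCenter ℓ i k) (α * dyadicScale ℓ i) (dyadicScale ℓ i) z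

/-- The cluster, represented by its point `Y i k`, that is selected over the cube of generation `i`
and index `k` containing `p`. -/
def treeCluster (π : X → Fin d → ℝ) (S : Set X) (ℓ : ℝ) (Y : ℕ → (Fin d → ℤ) → X) (i : ℕ)
    (p : Fin d → ℝ) : Set X :=
  dyadicCluster π S ℓ 6 i (cubeIndex ℓ i p) (Y i (cubeIndex ℓ i p))

/-- The points `Y` select nested essential clusters over the dyadic subcubes of
`dyadicCube ℓ 0 0`. -/
structure IsClusterTree (π : X → Fin d → ℝ) (S : Set X) (ℓ : ℝ) (Y : ℕ → (Fin d → ℤ) → X) :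
    Prop where
  isDyadicEssential : ∀ p ∈ dyadicCube ℓ 0 0, ∀ i,
    IsDyadicEssential π S ℓ 6 i (cubeIndex ℓ i p) (Y i (cubeIndex ℓ i p))
  mem_treeCluster : ∀ p ∈ dyadicCube ℓ 0 0, ∀ i,
    Y (i + 1) (cubeIndex ℓ (i + 1) p) ∈ treeCluster π S ℓ Y i p

/-- The cluster selected in generation `i` over `p` contains several essential clusters over a
neighborhood of the cube of generation `i + 1` containing `p`. -/
def IsAmbiguous (π : X → Fin d → ℝ) (S : Set X) (ℓ : ℝ) (Y : ℕ → (Fin d → ℤ) → X) (i : ℕ)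
    (p : Fin d → ℝ) : Prop :=
  ∃ u ∈ treeCluster π S ℓ Y i p, ∃ v ∈ treeCluster π S ℓ Y i p,
    IsDyadicEssential π S ℓ 1 (i + 1) (cubeIndex ℓ (i + 1) p) u ∧
    IsDyadicEssential π S ℓ 1 (i + 1) (cubeIndex ℓ (i + 1) p) v ∧
    dyadicCluster π S ℓ 1 (i + 1) (cubeIndex ℓ (i + 1) p) u ≠
      dyadicCluster π S ℓ 1 (i + 1) (cubeIndex ℓ (i + 1) p) v

lemma dyadicCluster_subset_of_le (hℓ : 0 < ℓ) (hαβ : α ≤ β)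
    (hz : z ∈ dyadicCluster π S ℓ β i k y) :
    dyadicCluster π S ℓ α i k z ⊆ dyadicCluster π S ℓ β i k y := by
  have hs : 0 < dyadicScale ℓ i := dyadicScale_pos hℓ
  exact cluster_subset_of_mem (by rw [dist_self, zero_add]; gcongr) le_rfl hz

lemma dyadicCluster_subset_of_dist_le (hℓ : 0 < ℓ)
    (h : 5 / 4 * dyadicScale ℓ i + α * dyadicScale ℓ i ≤ β * dyadicScale ℓ i)
    (hpq : dist p q ≤ dyadicScale ℓ i / 4)
    (hz : z ∈ dyadicCluster π S ℓ β i (cubeIndex ℓ i q) y) :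
    dyadicCluster π S ℓ α i (cubeIndex ℓ i p) z ⊆ dyadicCluster π S ℓ β i (cubeIndex ℓ i q) y := by
  have := dist_cubeCenter_cubeCenter_le hℓ (i := i) (i' := i) (p := p) (q := q)
  exact cluster_subset_of_mem (by linarith) le_rfl hz

lemma IsDyadicEssential.exists_mem (hπ : Continuous π) (hS : IsClosed S) (hℓ : 0 < ℓ) (hα : 0 < α)
    (hαβ : α ≤ β) (h : IsDyadicEssential π S ℓ β i k y) :
    ∃ z ∈ dyadicCluster π S ℓ β i k y, IsDyadicEssential π S ℓ α i k z := by
  have hs : 0 < dyadicScale ℓ i := dyadicScale_pos hℓ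
  exact IsEssential.exists_mem_cluster hπ hS h hs le_rfl (by positivity)
    (by rw [dist_self, zero_add]; gcongr)

lemma IsDyadicEssential.exists_mem_succ (hπ : Continuous π) (hS : IsClosed S) (hℓ : 0 < ℓ)
    (hβ : 9 / 2 ≤ β) (hpq : dist p q ≤ dyadicScale ℓ (i + 1) / 4)
    (h : IsDyadicEssential π S ℓ β i (cubeIndex ℓ i p) y) :
    ∃ z ∈ dyadicCluster π S ℓ β i (cubeIndex ℓ i p) y,
      IsDyadicEssential π S ℓ 6 (i + 1) (cubeIndex ℓ (i + 1) q) z ∧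
      dyadicCluster π S ℓ 6 (i + 1) (cubeIndex ℓ (i + 1) q) z ⊆
        dyadicCluster π S ℓ β i (cubeIndex ℓ i p) y := by
  have hs : 0 < dyadicScale ℓ i := dyadicScale_pos hℓ
  have hsucc : dyadicScale ℓ (i + 1) = dyadicScale ℓ i / 2 := dyadicScale_succ
  have hdist := dist_cubeCenter_cubeCenter_le hℓ (i := i + 1) (i' := i) (p := q) (q := p)
  rw [dist_comm q p] at hdist
  have hball : dist (cubeCenter ℓ (i + 1) (cubeIndex ℓ (i + 1) q))
      (cubeCenter ℓ i (cubeIndex ℓ i p)) + 6 * dyadicScale ℓ (i + 1) ≤ β * dyadicScale ℓ i := by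
    nlinarith
  obtain ⟨z, hz, hze⟩ := IsEssential.exists_mem_cluster hπ hS h
    (dyadicScale_pos hℓ (i := i + 1)) (by linarith) (by linarith) hball
  exact ⟨z, hz, hze, cluster_subset_of_mem hball (by linarith) hz⟩

lemma exists_isClusterTree (hπ : Continuous π) (hS : IsClosed S) (hℓ : 0 < ℓ)
    (hess : ¬ Inessential π S (ball (cubeCenter ℓ 0 0) (6 * ℓ))) :
    ∃ Y, IsClusterTree π S ℓ Y := by
  obtain ⟨y₀, -, hy₀⟩ := exists_isEssential hπ hS Subset.rfl hℓ (c' := cubeCenter ℓ 0 0)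
    (ρ' := 6 * ℓ) (by positivity) (by simp) hess
  have : Nonempty X := ⟨y₀⟩
  let Y : ℕ → (Fin d → ℤ) → X := fun i => Nat.rec (fun _ => y₀)
    (fun i f k => Classical.epsilon fun z =>
      z ∈ dyadicCluster π S ℓ 6 i (parentIndex k) (f (parentIndex k)) ∧
        IsDyadicEssential π S ℓ 6 (i + 1) k z) i
  have hsucc : ∀ p i, IsDyadicEssential π S ℓ 6 i (cubeIndex ℓ i p) (Y i (cubeIndex ℓ i p)) →
      Y (i + 1) (cubeIndex ℓ (i + 1) p) ∈ treeCluster π S ℓ Y i p ∧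
      IsDyadicEssential π S ℓ 6 (i + 1) (cubeIndex ℓ (i + 1) p)
        (Y (i + 1) (cubeIndex ℓ (i + 1) p)) := by
    intro p i h
    obtain ⟨z, hz, hze, -⟩ := h.exists_mem_succ hπ hS hℓ (by norm_num) (q := p)
      (by rw [dist_self]; linarith [dyadicScale_pos hℓ (i := i + 1)])
    simp only [treeCluster, ← parentIndex_cubeIndex (i := i)] at hz ⊢
    exact Classical.epsilon_spec (p := fun z => _ ∧ _) ⟨z, hz, hze⟩
  have hess : ∀ p ∈ dyadicCube ℓ 0 0, ∀ i,
      IsDyadicEssential π S ℓ 6 i (cubeIndex ℓ i p) (Y i (cubeIndex ℓ i p)) := by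
    intro p hp i
    induction i with
    | zero => rwa [IsDyadicEssential, show cubeIndex ℓ 0 p = 0 from hp, dyadicScale_zero]
    | succ i ih => exact (hsucc p i ih).2
  exact ⟨Y, hess, fun p hp i => (hsucc p i (hess p hp i)).1⟩

namespace IsClusterTree

lemma treeCluster_subset_slab (hY : IsClusterTree π S ℓ Y) (hp : p ∈ dyadicCube ℓ 0 0) :
    treeCluster π S ℓ Y i p ⊆
      slab π S (cubeCenter ℓ i (cubeIndex ℓ i p)) (6 * dyadicScale ℓ i) :=
  chainComponent_subset (hY.isDyadicEssential p hp i).1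

lemma treeCluster_succ_subset (hℓ : 0 < ℓ) (hY : IsClusterTree π S ℓ Y)
    (hp : p ∈ dyadicCube ℓ 0 0) : treeCluster π S ℓ Y (i + 1) p ⊆ treeCluster π S ℓ Y i p := by
  have hs : 0 < dyadicScale ℓ i := dyadicScale_pos hℓ
  have hsucc : dyadicScale ℓ (i + 1) = dyadicScale ℓ i / 2 := dyadicScale_succ
  have hdist := dist_cubeCenter_cubeCenter_le hℓ (i := i + 1) (i' := i) (p := p) (q := p)
  rw [dist_self] at hdist
  exact cluster_subset_of_mem (by linarith) (by linarith) (hY.mem_treeCluster p hp i)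

lemma isClosed_treeCluster (hπ : Continuous π) (hS : IsClosed S) (hℓ : 0 < ℓ)
    (hY : IsClusterTree π S ℓ Y) (hp : p ∈ dyadicCube ℓ 0 0) :
    IsClosed (treeCluster π S ℓ Y i p) :=
  isClosed_chainComponent (isClosed_slab hπ hS) (dyadicScale_pos hℓ)
    (hY.isDyadicEssential p hp i).1

lemma exists_forall_mem_treeCluster (hπ : Continuous π) (hS : IsCompact S) (hSc : IsClosed S)
    (hℓ : 0 < ℓ) (hY : IsClusterTree π S ℓ Y) (hp : p ∈ dyadicCube ℓ 0 0) :
    ∃ y, π y = p ∧ ∀ i, y ∈ treeCluster π S ℓ Y i p := by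
  have hcl : ∀ i, IsClosed (treeCluster π S ℓ Y i p) :=
    fun i => hY.isClosed_treeCluster hπ hSc hℓ hp
  obtain ⟨y, hy⟩ := IsCompact.nonempty_iInter_of_sequence_nonempty_isCompact_isClosed
    (fun i => treeCluster π S ℓ Y i p) (fun i => hY.treeCluster_succ_subset hℓ hp)
    (fun i => ⟨_, mem_chainComponent_self⟩)
    (hS.of_isClosed_subset (hcl 0) ((hY.treeCluster_subset_slab hp).trans inter_subset_left)) hcl
  rw [mem_iInter] at hy
  have hlim := ge_of_tendsto' ((tendsto_dyadicScale (ℓ := ℓ)).const_mul (13 / 2))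
    fun i => dist_le_of_mem_slab hℓ (hY.treeCluster_subset_slab hp (hy i))
  rw [mul_zero] at hlim
  exact ⟨y, dist_le_zero.1 hlim, hy⟩

end IsClusterTree

lemma treeCluster_subset_or_disjoint (hℓ : 0 < ℓ) :
    treeCluster π S ℓ Y (i + 4) p ⊆ dyadicCluster π S ℓ 1 i (cubeIndex ℓ i p) z ∨
      Disjoint (treeCluster π S ℓ Y (i + 4) p) (dyadicCluster π S ℓ 1 i (cubeIndex ℓ i p) z) := by
  have hs : 0 < dyadicScale ℓ i := dyadicScale_pos hℓ
  have hs4 : dyadicScale ℓ (i + 4) = dyadicScale ℓ i / 16 := by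
    simp only [dyadicScale, pow_add, ← div_div]
    norm_num
  have hdist := dist_cubeCenter_cubeCenter_le hℓ (i := i + 4) (i' := i) (p := p) (q := p)
  rw [dist_self] at hdist
  refine or_iff_not_imp_right.2 fun hmeet => ?_
  obtain ⟨y, hy, hyz⟩ := not_disjoint_iff.1 hmeet
  have heq : dyadicCluster π S ℓ 6 (i + 4) (cubeIndex ℓ (i + 4) p) y =
    treeCluster π S ℓ Y (i + 4) p := chainComponent_eq_of_mem hy
  exact heq ▸ cluster_subset_of_mem (by linarith) (by linarith) hyz

/-- The cluster selected in generation `i + 5` is too small to meet both of the distinct clusters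
that make the cube ambiguous, each of which covers the cube. -/
lemma IsAmbiguous.exists_mem_treeCluster_notMem (hπ : Continuous π) (hℓ : 0 < ℓ)
    (hamb : IsAmbiguous π S ℓ Y i p) :
    ∃ y ∈ treeCluster π S ℓ Y i p, π y = p ∧ y ∉ treeCluster π S ℓ Y (i + 5) p := by
  obtain ⟨u, hu, v, hv, hue, hve, hne⟩ := hamb
  have hs : 0 < dyadicScale ℓ (i + 1) := dyadicScale_pos hℓ
  have hsucc : dyadicScale ℓ (i + 1) = dyadicScale ℓ i / 2 := dyadicScale_succ
  by_contra! hno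
  have hsub : ∀ w ∈ treeCluster π S ℓ Y i p,
      IsDyadicEssential π S ℓ 1 (i + 1) (cubeIndex ℓ (i + 1) p) w →
      treeCluster π S ℓ Y (i + 5) p ⊆
        dyadicCluster π S ℓ 1 (i + 1) (cubeIndex ℓ (i + 1) p) w := by
    intro w hw hwe
    refine (treeCluster_subset_or_disjoint hℓ).resolve_right fun hdisj => ?_
    have hp : p ∈ ball (cubeCenter ℓ (i + 1) (cubeIndex ℓ (i + 1) p))
        (1 * dyadicScale ℓ (i + 1)) := by
      rw [mem_ball]
      linarith [dist_cubeCenter_cubeIndex_le hℓ (p := p) (i := i + 1)]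
    obtain ⟨y, hy, hyp⟩ := subset_image_of_not_inessential isOpen_ball (convex_ball _ _)
      isBounded_ball hπ.continuousOn hwe.2 hp
    have hdist := dist_cubeCenter_cubeCenter_le hℓ (i := i + 1) (i' := i) (p := p) (q := p)
    rw [dist_self] at hdist
    exact disjoint_left.1 hdisj
      (hno y (cluster_subset_of_mem (by linarith) (by linarith) hw hy) hyp) hy
  have hmem : Y (i + 5) (cubeIndex ℓ (i + 5) p) ∈ treeCluster π S ℓ Y (i + 5) p :=
    mem_chainComponent_self
  exact hne ((chainComponent_eq_of_mem (hsub u hu hue hmem)).symm.trans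
    (chainComponent_eq_of_mem (hsub v hv hve hmem)))

lemma dyadicCluster_subset_of_not_isAmbiguous (hπ : Continuous π) (hS : IsClosed S) (hℓ : 0 < ℓ)
    (hα : 1 ≤ α) (hamb : ¬ IsAmbiguous π S ℓ Y i p)
    (ha : IsDyadicEssential π S ℓ α (i + 1) (cubeIndex ℓ (i + 1) p) a)
    (hb : IsDyadicEssential π S ℓ α (i + 1) (cubeIndex ℓ (i + 1) p) b)
    (haT : dyadicCluster π S ℓ α (i + 1) (cubeIndex ℓ (i + 1) p) a ⊆ treeCluster π S ℓ Y i p)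
    (hbT : dyadicCluster π S ℓ α (i + 1) (cubeIndex ℓ (i + 1) p) b ⊆ treeCluster π S ℓ Y i p) :
    dyadicCluster π S ℓ α (i + 1) (cubeIndex ℓ (i + 1) p) a ⊆
      dyadicCluster π S ℓ α (i + 1) (cubeIndex ℓ (i + 1) p) b := by
  obtain ⟨a', ha', hae⟩ := ha.exists_mem hπ hS hℓ one_pos hα
  obtain ⟨b', hb', hbe⟩ := hb.exists_mem hπ hS hℓ one_pos hα
  have heq : dyadicCluster π S ℓ 1 (i + 1) (cubeIndex ℓ (i + 1) p) a' =
      dyadicCluster π S ℓ 1 (i + 1) (cubeIndex ℓ (i + 1) p) b' := by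
    by_contra hne
    exact hamb ⟨a', haT ha', b', hbT hb', hae, hbe, hne⟩
  have hab : a' ∈ dyadicCluster π S ℓ α (i + 1) (cubeIndex ℓ (i + 1) p) b :=
    dyadicCluster_subset_of_le hℓ hα hb' (heq ▸ mem_chainComponent_self)
  exact ((chainComponent_eq_of_mem ha').symm.trans (chainComponent_eq_of_mem hab)).subset

lemma IsClusterTree.treeCluster_succ_subset_dyadicCluster (hπ : Continuous π) (hS : IsClosed S)
    (hℓ : 0 < ℓ) (hY : IsClusterTree π S ℓ Y) (hq : q ∈ dyadicCube ℓ 0 0)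
    (hpq : dist p q ≤ dyadicScale ℓ (i + 1) / 4)
    (hz : IsDyadicEssential π S ℓ (9 / 2) i (cubeIndex ℓ i p) z)
    (hzq : dyadicCluster π S ℓ (9 / 2) i (cubeIndex ℓ i p) z ⊆ treeCluster π S ℓ Y i q)
    (hamb : ¬ IsAmbiguous π S ℓ Y i q) :
    treeCluster π S ℓ Y (i + 1) q ⊆ dyadicCluster π S ℓ (9 / 2) i (cubeIndex ℓ i p) z := by
  obtain ⟨a, -, hae, haz⟩ := hz.exists_mem_succ hπ hS hℓ le_rfl hpq
  exact (dyadicCluster_subset_of_not_isAmbiguous hπ hS hℓ (by norm_num) hamb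
    (hY.isDyadicEssential q hq (i + 1)) hae (hY.treeCluster_succ_subset hℓ hq)
    (haz.trans hzq)).trans haz

lemma IsClusterTree.exists_mem_treeCluster_succ_inter (hπ : Continuous π) (hS : IsClosed S)
    (hℓ : 0 < ℓ) (hY : IsClusterTree π S ℓ Y) (hp : p ∈ dyadicCube ℓ 0 0)
    (hq : q ∈ dyadicCube ℓ 0 0) (hpq : dist p q ≤ dyadicScale ℓ (i + 1) / 4)
    (hqp : treeCluster π S ℓ Y (i + 1) q ⊆ treeCluster π S ℓ Y i p)
    (hamb : ¬ IsAmbiguous π S ℓ Y i p) :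
    ∃ z ∈ treeCluster π S ℓ Y (i + 1) p ∩ treeCluster π S ℓ Y (i + 1) q,
      IsDyadicEssential π S ℓ (9 / 2) (i + 1) (cubeIndex ℓ (i + 1) p) z := by
  have hs : 0 < dyadicScale ℓ (i + 1) := dyadicScale_pos hℓ
  have hdist := dist_cubeCenter_cubeCenter_le hℓ (i := i + 1) (i' := i + 1) (p := p) (q := q)
  obtain ⟨a, ha, hae⟩ := (hY.isDyadicEssential p hp (i + 1)).exists_mem hπ hS hℓ
    (α := 9 / 2) (by norm_num) (by norm_num)
  obtain ⟨b, hb, hbe⟩ := IsEssential.exists_mem_cluster hπ hS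
    (hY.isDyadicEssential q hq (i + 1)) hs le_rfl (ρ' := 9 / 2 * dyadicScale ℓ (i + 1))
    (c' := cubeCenter ℓ (i + 1) (cubeIndex ℓ (i + 1) p)) (by linarith) (by linarith)
  have haT : dyadicCluster π S ℓ (9 / 2) (i + 1) (cubeIndex ℓ (i + 1) p) a ⊆
      treeCluster π S ℓ Y (i + 1) p := dyadicCluster_subset_of_le hℓ (by norm_num) ha
  have hbT : dyadicCluster π S ℓ (9 / 2) (i + 1) (cubeIndex ℓ (i + 1) p) b ⊆
      treeCluster π S ℓ Y (i + 1) q := dyadicCluster_subset_of_dist_le hℓ (by linarith) hpq hb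
  have hab := dyadicCluster_subset_of_not_isAmbiguous hπ hS hℓ (by norm_num) hamb hae hbe
    (haT.trans (hY.treeCluster_succ_subset hℓ hp)) (hbT.trans hqp)
  exact ⟨a, ⟨ha, hbT (hab mem_chainComponent_self)⟩, hae⟩

/-- As long as the cubes containing the two points only separate where there is no ambiguity, the
selected clusters keep an essential cluster in common. -/
lemma IsClusterTree.exists_mem_treeCluster_inter (hπ : Continuous π) (hS : IsClosed S) (hℓ : 0 < ℓ)
    (hY : IsClusterTree π S ℓ Y) (hp : p ∈ dyadicCube ℓ 0 0) (hq : q ∈ dyadicCube ℓ 0 0) {m : ℕ}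
    (hpq : dist p q ≤ dyadicScale ℓ m / 4)
    (hamb : ∀ i < m, cubeIndex ℓ (i + 1) p ≠ cubeIndex ℓ (i + 1) q →
      ¬ IsAmbiguous π S ℓ Y i p ∧ ¬ IsAmbiguous π S ℓ Y i q) :
    ∃ z ∈ treeCluster π S ℓ Y m p ∩ treeCluster π S ℓ Y m q,
      IsDyadicEssential π S ℓ (9 / 2) m (cubeIndex ℓ m p) z := by
  have hsame : ∀ m, cubeIndex ℓ m p = cubeIndex ℓ m q →
      ∃ z ∈ treeCluster π S ℓ Y m p ∩ treeCluster π S ℓ Y m q,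
        IsDyadicEssential π S ℓ (9 / 2) m (cubeIndex ℓ m p) z := by
    intro m hm
    obtain ⟨z, hz, hze⟩ := (hY.isDyadicEssential p hp m).exists_mem hπ hS hℓ
      (α := 9 / 2) (by norm_num) (by norm_num)
    exact ⟨z, ⟨hz, by rwa [treeCluster, ← hm]⟩, hze⟩
  induction m with
  | zero => exact hsame 0 (hp.trans hq.symm)
  | succ m ih =>
    by_cases hm : cubeIndex ℓ (m + 1) p = cubeIndex ℓ (m + 1) q
    · exact hsame _ hm
    have hs : 0 < dyadicScale ℓ m := dyadicScale_pos hℓ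
    have hsucc : dyadicScale ℓ (m + 1) = dyadicScale ℓ m / 2 := dyadicScale_succ
    have hpq' : dist p q ≤ dyadicScale ℓ m / 4 := by linarith
    obtain ⟨z, ⟨hzp, hzq⟩, hze⟩ := ih hpq' fun i hi => hamb i (by omega)
    obtain ⟨hap, haq⟩ := hamb m (by omega) hm
    have hLq := hY.treeCluster_succ_subset_dyadicCluster hπ hS hℓ hq hpq hze
      (dyadicCluster_subset_of_dist_le hℓ (by linarith) hpq' hzq) haq
    exact hY.exists_mem_treeCluster_succ_inter hπ hS hℓ hp hq hpq
      (hLq.trans (dyadicCluster_subset_of_le hℓ (by norm_num) hzp)) hap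

end Tree

lemma ofReal_half_le_of_le_add {x : ℝ} {a b c : ℝ≥0∞} (hx : 0 ≤ x)
    (h : ENNReal.ofReal x ≤ a + (b + c)) (hb : b ≤ ENNReal.ofReal (x / 4))
    (hc : c ≤ ENNReal.ofReal (x / 4)) : ENNReal.ofReal (x / 2) ≤ a := by
  have hbc : b + c ≤ ENNReal.ofReal (x / 2) := by
    refine (add_le_add hb hc).trans_eq ?_
    rw [← ENNReal.ofReal_add (by positivity) (by positivity)]
    ring_nf
  refine (ENNReal.add_le_add_iff_right (ENNReal.ofReal_ne_top (r := x / 2))).1 ?_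
  rw [← ENNReal.ofReal_add (by positivity) (by positivity), add_halves]
  exact h.trans (by gcongr)

lemma mul_volume_exists_mul_le_le {d : ℕ} {X : Type*} [MeasurableSpace X] {μ : Measure X}
    {π : X → Fin d → ℝ} {S : Set X} {ℓ : ℝ} {l : ℝ≥0∞} (hπ : Measurable π) (hℓ : 0 < ℓ) :
    l * volume {p | ∃ i, l * volume (closedBall p (7 * dyadicScale ℓ i)) ≤
      μ (S ∩ π ⁻¹' closedBall p (7 * dyadicScale ℓ i))} ≤ 4 ^ d * μ S := by
  have hball : ∀ p r, (μ.restrict S).map π (closedBall p r) = μ (S ∩ π ⁻¹' closedBall p r) :=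
    fun p r => by
      rw [Measure.map_apply hπ measurableSet_closedBall,
        Measure.restrict_apply (hπ measurableSet_closedBall), inter_comm]
  have h := mul_addHaar_exists_mul_le_le volume ((μ.restrict S).map π) (l := l) (R := 7 * ℓ)
    (r := fun i => 7 * dyadicScale ℓ i) (fun i => mul_pos (by norm_num) (dyadicScale_pos hℓ))
    fun i => by gcongr; exact dyadicScale_le hℓ.le
  simpa only [hball, Measure.map_apply hπ MeasurableSet.univ, preimage_univ,
    Measure.restrict_apply_univ, Module.finrank_fin_fun] using h

/-! ### Lipschitz sections -/

section LipschitzSection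

variable {d : ℕ} {X : Type*} [PseudoMetricSpace X] {π : X → Fin d → ℝ} {S : Set X} {ℓ η : ℝ}
  {l : ℝ≥0∞} {i : ℕ} {Y : ℕ → (Fin d → ℤ) → X} {p q : Fin d → ℝ} {y z : X}

lemma mem_dyadicCube_zero_congr (h : cubeIndex ℓ i p = cubeIndex ℓ i q) {k : Fin d → ℤ} :
    p ∈ dyadicCube ℓ 0 k ↔ q ∈ dyadicCube ℓ 0 k := by
  induction i with
  | zero => exact Eq.congr_left h
  | succ i ih => exact ih (by rw [← parentIndex_cubeIndex, h, parentIndex_cubeIndex])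

lemma isAmbiguous_congr (h : cubeIndex ℓ (i + 1) p = cubeIndex ℓ (i + 1) q) :
    IsAmbiguous π S ℓ Y i p ↔ IsAmbiguous π S ℓ Y i q := by
  have hparent : cubeIndex ℓ i p = cubeIndex ℓ i q := by
    rw [← parentIndex_cubeIndex, h, parentIndex_cubeIndex]
  simp only [IsAmbiguous, treeCluster, h, hparent]

variable [MeasurableSpace X] {μ : Measure X}

section Volume

variable [OpensMeasurableSpace X]

lemma IsClusterTree.measurableSet_setOf_mem_treeCluster (hπ : Continuous π) (hS : IsClosed S)
    (hℓ : 0 < ℓ) (hY : IsClusterTree π S ℓ Y) (i : ℕ) :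
    MeasurableSet {y | π y ∈ dyadicCube ℓ 0 0 ∧ y ∈ treeCluster π S ℓ Y i (π y)} := by
  have hunion : {y | π y ∈ dyadicCube ℓ 0 0 ∧ y ∈ treeCluster π S ℓ Y i (π y)} =
      ⋃ k ∈ cubeIndex ℓ i '' dyadicCube ℓ 0 0,
        π ⁻¹' (dyadicCube ℓ 0 0 ∩ dyadicCube ℓ i k) ∩ dyadicCluster π S ℓ 6 i k (Y i k) := by
    ext y
    simp only [treeCluster, mem_ofPred_eq, mem_iUnion₂]
    refine ⟨fun h => ⟨_, mem_image_of_mem _ h.1, ⟨h.1, rfl⟩, h.2⟩, ?_⟩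
    rintro ⟨_, -, ⟨hy, rfl⟩, hyk⟩
    exact ⟨hy, hyk⟩
  rw [hunion]
  refine MeasurableSet.biUnion (to_countable _) ?_
  rintro _ ⟨p, hp, rfl⟩
  exact (hπ.measurable (measurableSet_dyadicCube.inter measurableSet_dyadicCube)).inter
    (hY.isClosed_treeCluster hπ hS hℓ hp).measurableSet

/-- Each ambiguity discards mass within five generations, and no mass is discarded twice. -/
lemma IsClusterTree.tsum_volume_isAmbiguous_le (hπ : Continuous π)
    (hμ : ∀ B, volume (π '' B) ≤ μ B) (hS : IsClosed S) (hℓ : 0 < ℓ)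
    (hY : IsClusterTree π S ℓ Y) :
    ∑' i, volume {p ∈ dyadicCube ℓ 0 0 | IsAmbiguous π S ℓ Y i p} ≤ 5 * μ S := by
  let T : ℕ → Set X := fun i => {y | π y ∈ dyadicCube ℓ 0 0 ∧ y ∈ treeCluster π S ℓ Y i (π y)}
  have hanti : Antitone T := antitone_nat_of_succ_le
    fun i y hy => ⟨hy.1, hY.treeCluster_succ_subset hℓ hy.1 hy.2⟩
  have hsub : ∀ i, {p ∈ dyadicCube ℓ 0 0 | IsAmbiguous π S ℓ Y i p} ⊆
      π '' (T i \ T (i + 5)) := by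
    rintro i p ⟨hp, hamb⟩
    obtain ⟨y, hy, rfl, hy'⟩ := hamb.exists_mem_treeCluster_notMem hπ hℓ
    exact ⟨y, ⟨⟨hp, hy⟩, fun h => hy' h.2⟩, rfl⟩
  calc ∑' i, volume {p ∈ dyadicCube ℓ 0 0 | IsAmbiguous π S ℓ Y i p}
      ≤ ∑' i, μ (T i \ T (i + 5)) :=
        ENNReal.tsum_le_tsum fun i => (measure_mono (hsub i)).trans (hμ _)
    _ ≤ 5 * μ (T 0) := tsum_measure_sdiff_le (fun i =>
        (hY.measurableSet_setOf_mem_treeCluster hπ hS hℓ i).nullMeasurableSet) hanti 5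
    _ ≤ 5 * μ S := by
        gcongr
        exact fun y hy => (hY.treeCluster_subset_slab hy.1 hy.2).1

lemma IsClusterTree.volume_boundaryLayer_isAmbiguous_le (hπ : Continuous π)
    (hμ : ∀ B, volume (π '' B) ≤ μ B) (hS : IsClosed S) (hℓ : 0 < ℓ)
    (hY : IsClusterTree π S ℓ Y) (hη : 0 ≤ η) (hη' : η ≤ 1 / 2) :
    volume {p ∈ dyadicCube ℓ 0 0 | ∃ i, IsAmbiguous π S ℓ Y i p ∧
      p ∈ boundaryLayer ℓ η (i + 1) (cubeIndex ℓ (i + 1) p)} ≤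
        ENNReal.ofReal (2 * d * η) * (5 * μ S) := by
  let I : ℕ → Set (Fin d → ℤ) := fun i =>
    cubeIndex ℓ (i + 1) '' {p ∈ dyadicCube ℓ 0 0 | IsAmbiguous π S ℓ Y i p}
  have hcover : {p ∈ dyadicCube ℓ 0 0 | ∃ i, IsAmbiguous π S ℓ Y i p ∧
      p ∈ boundaryLayer ℓ η (i + 1) (cubeIndex ℓ (i + 1) p)} ⊆
        ⋃ i, ⋃ k ∈ I i, boundaryLayer ℓ η (i + 1) k := fun p ⟨hp, i, hamb, hlayer⟩ =>
    mem_iUnion.2 ⟨i, mem_biUnion (mem_image_of_mem _ ⟨hp, hamb⟩) hlayer⟩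
  have hcubes : ∀ i, ⋃ k ∈ I i, dyadicCube ℓ (i + 1) k ⊆
      {p ∈ dyadicCube ℓ 0 0 | IsAmbiguous π S ℓ Y i p} := by
    refine fun i => iUnion₂_subset ?_
    rintro _ ⟨p, ⟨hp, hamb⟩, rfl⟩ q hq
    exact ⟨(mem_dyadicCube_zero_congr hq).2 hp, (isAmbiguous_congr hq).2 hamb⟩
  calc _ ≤ ∑' i, volume (⋃ k ∈ I i, boundaryLayer ℓ η (i + 1) k) :=
        (measure_mono hcover).trans (measure_iUnion_le _)
    _ ≤ ∑' i, ENNReal.ofReal (2 * d * η) * volume (⋃ k ∈ I i, dyadicCube ℓ (i + 1) k) :=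
        ENNReal.tsum_le_tsum fun i => volume_biUnion_boundaryLayer_le hℓ hη hη' _
    _ ≤ ENNReal.ofReal (2 * d * η) *
          ∑' i, volume {p ∈ dyadicCube ℓ 0 0 | IsAmbiguous π S ℓ Y i p} := by
        rw [ENNReal.tsum_mul_left]
        gcongr
        exact hcubes _
    _ ≤ ENNReal.ofReal (2 * d * η) * (5 * μ S) := by
        gcongr
        exact hY.tsum_volume_isAmbiguous_le hπ hμ hS hℓ

end Volume

/-- The points of `dyadicCube ℓ 0 0` that are far from the boundaries of the ambiguous cubes and
around which the image of `μ` restricted to `S` has density less than `l` at all dyadic scales. -/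
def goodSet (μ : Measure X) (π : X → Fin d → ℝ) (S : Set X) (ℓ η : ℝ) (l : ℝ≥0∞)
    (Y : ℕ → (Fin d → ℤ) → X) : Set (Fin d → ℝ) :=
  {p ∈ dyadicCube ℓ 0 0 |
    (∀ i, IsAmbiguous π S ℓ Y i p → p ∉ boundaryLayer ℓ η (i + 1) (cubeIndex ℓ (i + 1) p)) ∧
    ∀ i, μ (S ∩ π ⁻¹' closedBall p (7 * dyadicScale ℓ i)) <
      l * volume (closedBall p (7 * dyadicScale ℓ i))}

lemma volume_dyadicCube_le_volume_goodSet_add : volume (dyadicCube ℓ 0 (0 : Fin d → ℤ)) ≤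
    volume (goodSet μ π S ℓ η l Y) +
      (volume {p ∈ dyadicCube ℓ 0 0 | ∃ i, IsAmbiguous π S ℓ Y i p ∧
          p ∈ boundaryLayer ℓ η (i + 1) (cubeIndex ℓ (i + 1) p)} +
        volume {p : Fin d → ℝ | ∃ i, l * volume (closedBall p (7 * dyadicScale ℓ i)) ≤
          μ (S ∩ π ⁻¹' closedBall p (7 * dyadicScale ℓ i))}) := by
  refine le_trans (measure_mono fun p hp => ?_) ((measure_union_le _ _).trans
    (add_le_add_right (measure_union_le _ _) _))
  by_contra! hno
  simp only [mem_union, not_or] at hno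
  exact hno.1 ⟨hp, fun i hamb hlayer => hno.2.1 ⟨hp, i, hamb, hlayer⟩,
    fun i => not_le.1 fun hdense => hno.2.2 ⟨i, hdense⟩⟩

lemma IsClusterTree.le_volume_goodSet [OpensMeasurableSpace X] (hπ : Continuous π)
    (hμ : ∀ B, volume (π '' B) ≤ μ B) (hS : IsClosed S) (hℓ : 0 < ℓ) (hY : IsClusterTree π S ℓ Y)
    {A : ℝ} (hA : 0 < A) (hμS : μ S ≤ ENNReal.ofReal (A * ℓ ^ d)) (hη : 0 ≤ η) (hη' : η ≤ 1 / 2)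
    (hηA : 40 * d * A * η ≤ 1) :
    ENNReal.ofReal (ℓ ^ d / 2) ≤
      volume (goodSet μ π S ℓ η (ENNReal.ofReal (4 ^ (d + 1) * A)) Y) := by
  have hcube : volume (dyadicCube ℓ 0 (0 : Fin d → ℤ)) = ENNReal.ofReal (ℓ ^ d) := by
    rw [volume_dyadicCube hℓ, dyadicScale_zero]
  refine ofReal_half_le_of_le_add (by positivity)
    (hcube ▸ volume_dyadicCube_le_volume_goodSet_add) ?_ ?_
  · calc _ ≤ ENNReal.ofReal (2 * d * η) * (5 * μ S) :=
          hY.volume_boundaryLayer_isAmbiguous_le hπ hμ hS hℓ hη hη'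
      _ ≤ ENNReal.ofReal (2 * d * η) * (5 * ENNReal.ofReal (A * ℓ ^ d)) := by gcongr
      _ = ENNReal.ofReal (40 * d * A * η * (ℓ ^ d / 4)) := by
          rw [← ENNReal.ofReal_ofNat 5, ← ENNReal.ofReal_mul (by norm_num),
            ← ENNReal.ofReal_mul (by positivity)]
          ring_nf
      _ ≤ _ := ENNReal.ofReal_le_ofReal (mul_le_of_le_one_left (by positivity) hηA)
  · have hl : 0 < 4 ^ (d + 1) * A := by positivity
    refine (ENNReal.mul_le_mul_iff_right (ENNReal.ofReal_pos.2 hl).ne'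
      ENNReal.ofReal_ne_top).1 ?_
    calc _ ≤ 4 ^ d * μ S := mul_volume_exists_mul_le_le hπ.measurable hℓ
      _ ≤ 4 ^ d * ENNReal.ofReal (A * ℓ ^ d) := by gcongr
      _ = ENNReal.ofReal (4 ^ (d + 1) * A) * ENNReal.ofReal (ℓ ^ d / 4) := by
          rw [← ENNReal.ofReal_ofNat 4, ← ENNReal.ofReal_pow (by norm_num),
            ← ENNReal.ofReal_mul (by positivity), ← ENNReal.ofReal_mul hl.le, pow_succ]
          ring_nf

lemma IsClusterTree.dist_lt_of_mem_treeCluster [OpensMeasurableSpace X] (hπ : LipschitzWith 1 π)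
    (hS : IsClosed S) (hℓ : 0 < ℓ) (hY : IsClusterTree π S ℓ Y) (hp : p ∈ dyadicCube ℓ 0 0)
    {c l : ℝ} {N : ℕ} (hN : l * 28 ^ d ≤ (N + 1) * c)
    (hlow : ∀ y ∈ S, dist (π y) (cubeCenter ℓ 0 0) ≤ 7 * ℓ → ∀ t, 0 < t → t ≤ ℓ →
      ENNReal.ofReal (c * t ^ d) ≤ μ (S ∩ ball y t))
    (hdens : μ (S ∩ π ⁻¹' closedBall p (7 * dyadicScale ℓ i)) <
      ENNReal.ofReal l * volume (closedBall p (7 * dyadicScale ℓ i)))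
    (hy : y ∈ treeCluster π S ℓ Y i p) (hz : z ∈ treeCluster π S ℓ Y i p) :
    dist y z < 2 * dyadicScale ℓ i * N := by
  set s := dyadicScale ℓ i
  have hs : 0 < s := dyadicScale_pos hℓ
  have hsℓ : s ≤ ℓ := dyadicScale_le hℓ.le
  have hpc : dist p (cubeCenter ℓ 0 (cubeIndex ℓ 0 p)) ≤ _ := dist_cubeCenter_cubeIndex_le hℓ
  rw [show cubeIndex ℓ 0 p = 0 from hp, dyadicScale_zero] at hpc
  have hyz : z ∈ chainComponent
      (slab π S (cubeCenter ℓ i (cubeIndex ℓ i p)) (6 * s)) s y := by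
    rw [chainComponent_eq_of_mem hy]
    exact hz
  refine dist_lt_of_mem_chainComponent (μ := μ) (T := S ∩ π ⁻¹' closedBall p (7 * s))
    (κ := ENNReal.ofReal (c * (s / 2) ^ d))
    (hS.inter (isClosed_closedBall.preimage hπ.continuous)).measurableSet hs
    (hY.treeCluster_subset_slab hp hy) (fun a ha => ?_) (hdens.trans_le ?_) hyz
  · have hap : dist (π a) p ≤ 13 / 2 * s := dist_le_of_mem_slab hℓ ha
    refine (hlow a ha.1 (by linarith [dist_triangle (π a) p (cubeCenter ℓ 0 0)]) (s / 2)
      (by positivity) (by linarith)).trans (measure_mono fun w hw => ⟨⟨hw.1, ?_⟩, hw.2⟩)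
    have hwa : dist (π w) (π a) ≤ s / 2 := (hπ.dist_le_mul w a).trans (by simpa using hw.2.le)
    rw [mem_preimage, mem_closedBall]
    linarith [dist_triangle (π w) (π a) p]
  · rw [Real.volume_pi_closedBall p (by positivity), Fintype.card_fin,
      ← ENNReal.ofReal_mul' (by positivity), ← ENNReal.ofReal_natCast, ← ENNReal.ofReal_one,
      ← ENNReal.ofReal_add (by positivity) zero_le_one, ← ENNReal.ofReal_mul (by positivity)]
    refine ENNReal.ofReal_le_ofReal ?_
    calc l * (2 * (7 * s)) ^ d = l * 28 ^ d * (s / 2) ^ d := by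
          rw [mul_assoc, ← mul_pow]
          ring_nf
      _ ≤ (N + 1) * c * (s / 2) ^ d := by gcongr
      _ = (N + 1) * (c * (s / 2) ^ d) := mul_assoc _ _ _

lemma IsClusterTree.dist_lt_of_dist_lt (hπ : Continuous π) (hS : IsClosed S) (hℓ : 0 < ℓ)
    (hY : IsClusterTree π S ℓ Y) (hη : 0 ≤ η) (hη' : η ≤ 1 / 4) {C : ℝ} {m : ℕ}
    (hdiam : ∀ w ∈ goodSet μ π S ℓ η l Y, ∀ u ∈ treeCluster π S ℓ Y m w,
      ∀ v ∈ treeCluster π S ℓ Y m w, dist u v < C)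
    (hp : p ∈ goodSet μ π S ℓ η l Y) (hq : q ∈ goodSet μ π S ℓ η l Y)
    (hpq : dist p q ≤ η * dyadicScale ℓ m) (hy : y ∈ treeCluster π S ℓ Y m p)
    (hz : z ∈ treeCluster π S ℓ Y m q) : dist y z < 2 * C := by
  have hs : 0 < dyadicScale ℓ m := dyadicScale_pos hℓ
  have hmono : ∀ i < m, η * dyadicScale ℓ m ≤ η * dyadicScale ℓ (i + 1) := fun i hi => by
    unfold dyadicScale
    gcongr
    exacts [one_le_two, hi]
  obtain ⟨w, ⟨hwp, hwq⟩, -⟩ := hY.exists_mem_treeCluster_inter hπ hS hℓ hp.1 hq.1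
    (hpq.trans (by nlinarith)) fun i hi hne =>
      ⟨fun hamb => hp.2.1 i hamb ⟨rfl, q, Ne.symm hne, hpq.trans (hmono i hi)⟩,
        fun hamb => hq.2.1 i hamb ⟨rfl, p, hne, dist_comm p q ▸ hpq.trans (hmono i hi)⟩⟩
  linarith [dist_triangle y w z, hdiam p hp y hy w hwp, hdiam q hq w hwq z hz]

lemma IsClusterTree.dist_le_mul_dist (hπ : Continuous π) (hS : IsClosed S) (hℓ : 0 < ℓ)
    (hY : IsClusterTree π S ℓ Y) (hη : 0 < η) (hη' : η ≤ 1 / 4) {C : ℝ}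
    (hdiam : ∀ w ∈ goodSet μ π S ℓ η l Y, ∀ i, ∀ u ∈ treeCluster π S ℓ Y i w,
      ∀ v ∈ treeCluster π S ℓ Y i w, dist u v < C * dyadicScale ℓ i)
    (hp : p ∈ goodSet μ π S ℓ η l Y) (hq : q ∈ goodSet μ π S ℓ η l Y) (hpq : 0 < dist p q)
    (hy : ∀ i, y ∈ treeCluster π S ℓ Y i p) (hz : ∀ i, z ∈ treeCluster π S ℓ Y i q) :
    dist y z ≤ 4 * C / η * dist p q := by
  have hC : 0 < C := by
    have h := dist_nonneg.trans_lt (hdiam p hp 0 y (hy 0) y (hy 0))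
    exact pos_of_mul_pos_left h (dyadicScale_pos hℓ).le
  rcases le_total (η * ℓ) (dist p q) with hfar | hnear
  · have hz0 : z ∈ treeCluster π S ℓ Y 0 p := by
      rw [treeCluster, show cubeIndex ℓ 0 p = cubeIndex ℓ 0 q from hp.1.trans hq.1.symm]
      exact hz 0
    have hyz := hdiam p hp 0 y (hy 0) z hz0
    rw [dyadicScale_zero] at hyz
    calc dist y z ≤ 4 * (C * ℓ) := by nlinarith
      _ = 4 * C / η * (η * ℓ) := by field_simp
      _ ≤ _ := by gcongr
  · obtain ⟨m, hm, hm'⟩ := exists_nat_pow_near ((one_le_div hpq).2 hnear) one_lt_two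
    have hupper : dist p q ≤ η * dyadicScale ℓ m := by
      rw [le_div_iff₀ hpq] at hm
      rw [dyadicScale, ← mul_div_assoc, le_div_iff₀ (by positivity)]
      linarith
    have hlower : η * dyadicScale ℓ m ≤ 2 * dist p q := by
      rw [div_lt_iff₀ hpq, pow_succ] at hm'
      rw [dyadicScale, ← mul_div_assoc, div_le_iff₀ (by positivity)]
      linarith
    calc dist y z ≤ 2 * (C * dyadicScale ℓ m) :=
          (hY.dist_lt_of_dist_lt hπ hS hℓ hη.le hη' (fun w hw => hdiam w hw m) hp hq hupper
            (hy m) (hz m)).le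
      _ = 2 * C / η * (η * dyadicScale ℓ m) := by field_simp
      _ ≤ 2 * C / η * (2 * dist p q) := by gcongr
      _ = _ := by ring

end LipschitzSection

theorem exists_lipschitzOnWith_section (d : ℕ) {c A : ℝ} (hc : 0 < c) (hA : 0 < A) :
    ∃ M : NNReal, ∀ {X : Type*} [MetricSpace X] [MeasurableSpace X] [OpensMeasurableSpace X]
      {μ : Measure X} {π : X → Fin d → ℝ} {S : Set X} {ℓ : ℝ}, LipschitzWith 1 π →
      (∀ B, volume (π '' B) ≤ μ B) → IsCompact S → 0 < ℓ →
      μ S ≤ ENNReal.ofReal (A * ℓ ^ d) →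
      (∀ y ∈ S, dist (π y) (cubeCenter ℓ 0 0) ≤ 7 * ℓ → ∀ t, 0 < t → t ≤ ℓ →
        ENNReal.ofReal (c * t ^ d) ≤ μ (S ∩ ball y t)) →
      ¬ Inessential π S (ball (cubeCenter ℓ 0 0) (6 * ℓ)) →
      ∃ (G : Set (Fin d → ℝ)) (f : (Fin d → ℝ) → X), ENNReal.ofReal (ℓ ^ d / 2) ≤ volume G ∧
        G ⊆ dyadicCube ℓ 0 0 ∧ MapsTo f G S ∧ LeftInvOn π f G ∧ LipschitzOnWith M f G := by
  obtain ⟨N, hN⟩ := exists_nat_ge (4 ^ (d + 1) * A * 28 ^ d / c)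
  obtain ⟨η, hη, hη'⟩ : ∃ η : ℝ, 0 < η ∧ η ≤ 1 / 4 ∧ 40 * d * A * η ≤ 1 := by
    refine ⟨1 / (40 * d * A + 4), by positivity, ?_, ?_⟩
    · gcongr
      linarith [show 0 ≤ 40 * d * A by positivity]
    · rw [mul_one_div, div_le_one (by positivity)]
      linarith
  refine ⟨(4 * (2 * N) / η).toNNReal, fun hπ hμ hS hℓ hμS hlow hess => ?_⟩
  obtain ⟨Y, hY⟩ := exists_isClusterTree hπ.continuous hS.isClosed hℓ hess
  have : Nonempty _ := ⟨Y 0 0⟩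
  choose! f hfπ hf using fun p hp =>
    hY.exists_forall_mem_treeCluster hπ.continuous hS hS.isClosed hℓ (p := p) hp
  refine ⟨_, f, hY.le_volume_goodSet hπ.continuous hμ hS.isClosed hℓ hA hμS hη.le
    (hη'.1.trans (by norm_num)) hη'.2, fun p hp => hp.1,
    fun p hp => (hY.treeCluster_subset_slab hp.1 (hf p hp.1 0)).1, fun p hp => hfπ p hp.1,
    LipschitzOnWith.of_dist_le_mul fun p hp q hq => ?_⟩
  rcases eq_or_ne p q with rfl | hne
  · simp
  rw [Real.coe_toNNReal _ (by positivity)]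
  refine hY.dist_le_mul_dist hπ.continuous hS.isClosed hℓ hη hη'.1
    (fun w hw i u hu v hv => ?_) hp hq (dist_pos.2 hne) (hf p hp.1) (hf q hq.1)
  refine (hY.dist_lt_of_mem_treeCluster hπ hS.isClosed hℓ hw.1 ?_ hlow (hw.2.2 i) hu
    hv).trans_eq (by ring)
  rw [div_le_iff₀ hc] at hN
  linarith

/-! ### Flat sets -/

section Flat

variable {F : Type*} [NormedAddCommGroup F] [NormedSpace ℝ F] {E : Set F} {ε r : ℝ} {x : F}
  {Q : AffineSubspace ℝ F}

/-- `E` is `ε`-close to the affine subspace `Q` at `x`, at scale `r`. -/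
structure IsFlatAt (E : Set F) (ε : ℝ) (x : F) (r : ℝ) (Q : AffineSubspace ℝ F) : Prop where
  mem : x ∈ Q
  infDist_set_le : ∀ y ∈ Q, dist y x < r → infDist y E ≤ ε * r
  infDist_plane_le : ∀ y ∈ E, dist y x < r → infDist y (Q : Set F) ≤ ε * r

lemma IsFlatAt.infDist_lt_of_mem_convexHull (hQ : IsFlatAt E ε x r Q) {ρ δ : ℝ} (hδ : ε * r < δ)
    (hδ0 : 0 ≤ δ) (hρ : ρ + δ ≤ r) {z : F} (hz : z ∈ convexHull ℝ (E ∩ ball x ρ)) :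
    infDist z E < ε * r + δ := by
  have hsub : E ∩ ball x ρ ⊆ thickening δ (Q : Set F) ∩ ball x ρ := fun y hy =>
    ⟨(mem_thickening_iff_infDist_lt ⟨x, hQ.mem⟩).2
      ((hQ.infDist_plane_le y hy.1 (by linarith [mem_ball.1 hy.2])).trans_lt hδ), hy.2⟩
  obtain ⟨hzQ, hzx⟩ := convexHull_min hsub ((Q.convex.thickening δ).inter (convex_ball x ρ)) hz
  obtain ⟨w, hwQ, hzw⟩ := mem_thickening_iff.1 hzQ
  have hw := hQ.infDist_set_le w hwQ (by linarith [dist_triangle_left w x z, mem_ball.1 hzx])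
  linarith [infDist_le_infDist_add_dist (s := E) (x := z) (y := w)]

lemma infDist_lt_of_mem_convexHull_of_isFlatAt (hε : ε < 1 / 10)
    (hflat : ∀ y ∈ E, ∀ t, 0 < t → t ≤ 1 → ∃ Q, IsFlatAt E ε y t Q) {s : ℝ} (hs : 0 < s)
    (hs1 : 5 / 2 * s ≤ 1) {w z : F} (hz : z ∈ convexHull ℝ (E ∩ ball w s)) :
    infDist z E < s / 2 := by
  obtain ⟨y, hy⟩ : (E ∩ ball w s).Nonempty := convexHull_nonempty_iff.1 ⟨z, hz⟩
  obtain ⟨Q, hQ⟩ := hflat y hy.1 (5 / 2 * s) (by positivity) hs1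
  have hball : ball w s ⊆ ball y (2 * s) := ball_subset_ball' (by linarith [mem_ball'.1 hy.2])
  have hlt : ε * (5 / 2 * s) < s / 4 := by nlinarith
  linarith [hQ.infDist_lt_of_mem_convexHull hlt (by positivity) (by linarith)
    (convexHull_mono (inter_subset_inter_right E hball) hz)]

end Flat

section Perturbation

variable {T F : Type*} [TopologicalSpace T] [NormalSpace T] [ParacompactSpace T]
  [NormedAddCommGroup F] [NormedSpace ℝ F] {E : Set F} {s : ℝ}

lemma exists_continuousMap_forall_mem_convexHull_inter_ball (hne : E.Nonempty) {f : C(T, F)}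
    (hf : ∀ p, infDist (f p) E < s) : ∃ g : C(T, F), ∀ p, g p ∈ convexHull ℝ (E ∩ ball (f p) s) :=
  exists_continuous_forall_mem_convex_of_local_const (fun _ => convex_convexHull ℝ _) fun p => by
    obtain ⟨y, hy, hyp⟩ := (infDist_lt_iff hne).1 (hf p)
    have hnear : ∀ᶠ q in nhds p, dist (f q) y < s :=
      (f.continuous.dist continuous_const).continuousAt.eventually_lt continuousAt_const hyp
    exact ⟨y, hnear.mono fun q hq => subset_convexHull ℝ _ ⟨hy, mem_ball'.2 hq⟩⟩

/-- Halve the distance to `E` repeatedly, at each step by a selection in the convex hulls of small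
pieces of `E`. -/
lemma exists_continuousMap_mem_dist_le [CompleteSpace F] (hE : IsClosed E) (hne : E.Nonempty)
    (hs : 0 < s) (hull : ∀ t, 0 < t → t ≤ s → ∀ w, ∀ z ∈ convexHull ℝ (E ∩ ball w t),
      infDist z E < t / 2)
    {f₀ : C(T, F)} (hf₀ : ∀ p, infDist (f₀ p) E < s) :
    ∃ f : C(T, F), ∀ p, f p ∈ E ∧ dist (f₀ p) (f p) ≤ 2 * s := by
  have hsk : ∀ k : ℕ, 0 < s / 2 ^ k := fun k => by positivity
  have improve : ∀ (k : ℕ) (f : {f : C(T, F) // ∀ p, infDist (f p) E < s / 2 ^ k}),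
      ∃ g : {f : C(T, F) // ∀ p, infDist (f p) E < s / 2 ^ (k + 1)},
        ∀ p, dist (f.1 p) (g.1 p) ≤ 2 * s / 2 / 2 ^ k := fun k ⟨f, hf⟩ => by
    obtain ⟨g, hg⟩ := exists_continuousMap_forall_mem_convexHull_inter_ball hne hf
    refine ⟨⟨g, fun p => ?_⟩, fun p => ?_⟩
    · rw [pow_succ, ← div_div]
      exact hull _ (hsk k) (div_le_self hs.le (one_le_pow₀ one_le_two)) _ _ (hg p)
    · rw [mul_div_cancel_left₀ s two_ne_zero]
      exact (mem_ball'.1 (convexHull_min inter_subset_right (convex_ball _ _) (hg p))).le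
  choose next hnext using improve
  let f : ∀ k, {f : C(T, F) // ∀ p, infDist (f p) E < s / 2 ^ k} := fun k =>
    Nat.rec ⟨f₀, by simpa using hf₀⟩ next k
  choose g hg using fun p =>
    cauchySeq_tendsto_of_complete (cauchySeq_of_le_geometric_two fun k => hnext k (f k) p)
  have hfg : ∀ k p, dist ((f k).1 p) (g p) ≤ 2 * s / 2 ^ k := fun k p =>
    dist_le_of_le_geometric_two_of_tendsto (fun k => hnext k (f k) p) (hg p) k
  have hlim : ∀ C : ℝ, Filter.Tendsto (fun k : ℕ => C / 2 ^ k) Filter.atTop (nhds 0) := fun C =>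
    tendsto_const_nhds.div_atTop (tendsto_pow_atTop_atTop_of_one_lt one_lt_two)
  have hunif : TendstoUniformly (fun k p => (f k).1 p) g Filter.atTop := by
    refine Metric.tendstoUniformly_iff.2 fun η hη => ?_
    filter_upwards [(hlim (2 * s)).eventually (gt_mem_nhds hη)] with k hk p
    exact dist_comm (g p) _ ▸ (hfg k p).trans_lt hk
  refine ⟨⟨g, hunif.continuous (.of_forall fun k => (f k).1.continuous)⟩, fun p =>
    ⟨(hE.mem_iff_infDist_zero hne).2 (infDist_nonneg.antisymm' ?_), (hfg 0 p).trans_eq (by simp)⟩⟩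
  exact le_of_tendsto_of_tendsto' (((continuous_infDist_pt E).tendsto _).comp (hg p)) (hlim s)
    fun k => ((f k).2 p).le

end Perturbation

section PlaneCoordinates

variable {d : ℕ} {F : Type*} [NormedAddCommGroup F] [InnerProductSpace ℝ F]
  {D : Submodule ℝ F} (e : D ≃ₗᵢ[ℝ] EuclideanSpace ℝ (Fin d)) (x : F)

/-- The point of coordinates `p` on the plane `x + D`, with respect to the orthonormal coordinates
`e` of `D`. -/
def planePoint (p : Fin d → ℝ) : F := x + (e.symm (WithLp.toLp 2 p) : F)

/-- The coordinates of the orthogonal projection of `y` to the plane `x + D`, with respect to the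
orthonormal coordinates `e` of `D`. Their space carries the sup norm, as dyadic cubes require. -/
def planeCoord [D.HasOrthogonalProjection] (y : F) : Fin d → ℝ :=
  (e (D.orthogonalProjectionOnto (y - x))).ofLp

lemma planePoint_zero : planePoint e x 0 = x := by simp [planePoint]

lemma planePoint_mem {Q : AffineSubspace ℝ F} (e : Q.direction ≃ₗᵢ[ℝ] EuclideanSpace ℝ (Fin d))
    {x : F} (hx : x ∈ Q) (p : Fin d → ℝ) : planePoint e x p ∈ Q := by
  rw [planePoint, add_comm]
  exact Q.vadd_mem_of_mem_direction (e.symm _).2 hx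

lemma lipschitzWith_planePoint : LipschitzWith d (planePoint e x) := by
  have hcard : (d : NNReal) ^ (1 / 2 : ℝ) ≤ d := by
    rcases d.eq_zero_or_pos with rfl | hd
    · simp
    · exact NNReal.rpow_le_rpow_of_exponent_le (by exact_mod_cast hd) (by norm_num)
        |>.trans_eq (NNReal.rpow_one _)
  have h : LipschitzWith ((d : NNReal) ^ (1 / 2 : ℝ)) (WithLp.toLp 2 : (Fin d → ℝ) → _) := by
    simpa using PiLp.lipschitzWith_toLp 2 fun _ : Fin d => ℝ
  refine .of_dist_le_mul fun p q => ?_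
  rw [planePoint, planePoint, dist_add_left, ← Subtype.dist_eq, e.symm.dist_map]
  exact (h.weaken hcard).dist_le_mul p q

lemma dist_planePoint_le (p : Fin d → ℝ) : dist (planePoint e x p) x ≤ d * ‖p‖ := by
  simpa [planePoint_zero] using (lipschitzWith_planePoint e x).dist_le_mul p 0

lemma dist_planePoint_le_of_dist_cubeCenter_le {ℓ a : ℝ} (hℓ : 0 < ℓ)
    {p : Fin d → ℝ} (hp : dist p (cubeCenter ℓ 0 0) ≤ a * ℓ) :
    dist (planePoint e x p) x ≤ (a + 1 / 2) * d * ℓ :=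
  calc dist (planePoint e x p) x ≤ d * ‖p‖ := dist_planePoint_le e x p
    _ ≤ d * (a * ℓ + ℓ / 2) := by gcongr; linarith [norm_le_dist_cubeCenter_add hℓ p]
    _ = (a + 1 / 2) * d * ℓ := by ring

variable [D.HasOrthogonalProjection]

lemma planeCoord_planePoint (p : Fin d → ℝ) : planeCoord e x (planePoint e x p) = p := by
  simp [planeCoord, planePoint]

lemma planePoint_planeCoord {y : F} (hy : y - x ∈ D) : planePoint e x (planeCoord e x y) = y := by
  rw [planePoint, planeCoord, WithLp.toLp_ofLp, e.symm_apply_apply,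
    Submodule.coe_orthogonalProjectionOnto_apply, D.starProjection_eq_self_iff.2 hy,
    add_sub_cancel]

lemma lipschitzWith_planeCoord : LipschitzWith 1 (planeCoord e x) := by
  have hsub : LipschitzWith 1 fun y : F => y - x := (IsometryEquiv.subRight x).isometry.lipschitz
  exact ((PiLp.lipschitzWith_ofLp 2 fun _ : Fin d => ℝ).comp
    (e.lipschitz.comp (D.lipschitzWith_orthogonalProjectionOnto.comp hsub))).weaken (by simp)

lemma volume_image_planeCoord_le [MeasurableSpace F] [BorelSpace F] (B : Set F) :
    volume (planeCoord e x '' B) ≤ μH[(d : ℝ)] B := by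
  rw [← hausdorffMeasure_pi_real, Fintype.card_fin]
  simpa using (lipschitzWith_planeCoord e x).hausdorffMeasure_image_le d.cast_nonneg B

lemma exists_lipschitzWith_graph [FiniteDimensional ℝ F] {G : Set (Fin d → ℝ)}
    {f : (Fin d → ℝ) → F} {M : NNReal} (hfπ : LeftInvOn (planeCoord e x) f G)
    (hf : LipschitzOnWith M f G) :
    ∃ g : D → Dᗮ, LipschitzWith (lipschitzExtensionConstant F * M) g ∧
      ∀ p ∈ G, ∃ v : D, f p = x + (v : F) + (g v : F) := by
  obtain ⟨k, hk, hfk⟩ := hf.extend_finite_dimension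
  refine ⟨fun v => Dᗮ.orthogonalProjectionOnto (k (e v).ofLp - x), ?_, fun p hp =>
    ⟨D.orthogonalProjectionOnto (f p - x), ?_⟩⟩
  · have hsub : LipschitzWith 1 fun y : F => y - x := (IsometryEquiv.subRight x).isometry.lipschitz
    exact (Dᗮ.lipschitzWith_orthogonalProjectionOnto.comp (hsub.comp (hk.comp
      ((PiLp.lipschitzWith_ofLp 2 fun _ : Fin d => ℝ).comp e.lipschitz)))).weaken (by simp)
  · have hp' : (e (D.orthogonalProjectionOnto (f p - x))).ofLp = p := hfπ hp
    simp only [hp', ← hfk hp]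
    rw [Submodule.coe_orthogonalProjectionOnto_apply, Submodule.coe_orthogonalProjectionOnto_apply,
      add_assoc, D.starProjection_add_starProjection_orthogonal, add_sub_cancel]

end PlaneCoordinates

section FlatCoordinates

variable {d : ℕ} {F : Type*} [NormedAddCommGroup F] [InnerProductSpace ℝ F]
  [FiniteDimensional ℝ F] {E : Set F} {ε ℓ r : ℝ} {x : F} {Q : AffineSubspace ℝ F}
  {e : Q.direction ≃ₗᵢ[ℝ] EuclideanSpace ℝ (Fin d)}

lemma exists_continuousOn_dist_planePoint_le (hE : IsClosed E) (hx : x ∈ E) (hε : 0 < ε)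
    (hε' : ε < 1 / 10) (hr : 0 < r) (hr1 : r ≤ 1)
    (hflat : ∀ y ∈ E, ∀ t, 0 < t → t ≤ 1 → ∃ Q, IsFlatAt E ε y t Q) (hQ : IsFlatAt E ε x r Q)
    {K : Set (Fin d → ℝ)} (hK : ∀ p ∈ K, dist (planePoint e x p) x < r) :
    ∃ s : (Fin d → ℝ) → F, ContinuousOn s K ∧
      ∀ p ∈ K, s p ∈ E ∧ dist (planePoint e x p) (s p) ≤ 4 * (ε * r) := by
  have hεr : 0 < ε * r := by positivity
  obtain ⟨s, hs⟩ := exists_continuousMap_mem_dist_le hE ⟨x, hx⟩ (s := 2 * (ε * r)) (by positivity)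
    (fun t ht ht' w z hz => infDist_lt_of_mem_convexHull_of_isFlatAt hε' hflat ht
      (by nlinarith) hz)
    (f₀ := ⟨K.domRestrict (planePoint e x), (lipschitzWith_planePoint e x).continuous.comp
      continuous_subtype_val⟩)
    (fun p => by
      have := hQ.infDist_set_le _ (planePoint_mem e hQ.mem p) (hK p p.2)
      exact this.trans_lt (by linarith))
  classical
  refine ⟨fun p => if hp : p ∈ K then s ⟨p, hp⟩ else x, ?_, fun p hp => ?_⟩
  · rw [continuousOn_iff_continuous_domRestrict]
    convert s.continuous using 1
    ext p
    simp
  · have h := hs ⟨p, hp⟩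
    simp only [hp, dite_true]
    exact ⟨h.1, h.2.trans_eq (by ring)⟩

lemma not_inessential_planeCoord (hd : 0 < d) (hE : IsClosed E) (hx : x ∈ E) (hε : 0 < ε)
    (hεd : ε * (32 * d) ≤ 1) (hℓ : 0 < ℓ) (hℓ1 : 32 * d * ℓ ≤ 1)
    (hflat : ∀ y ∈ E, ∀ t, 0 < t → t ≤ 1 → ∃ Q, IsFlatAt E ε y t Q)
    (hQ : IsFlatAt E ε x (32 * d * ℓ) Q) :
    ¬ Inessential (planeCoord e x) (E ∩ closedBall x (16 * d * ℓ))
      (ball (cubeCenter ℓ 0 0) (6 * ℓ)) := by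
  have hd1 : (1 : ℝ) ≤ d := by exact_mod_cast hd
  have hdℓ : ℓ ≤ d * ℓ := le_mul_of_one_le_left hℓ.le hd1
  have hεℓ : ε * (32 * d * ℓ) ≤ ℓ := by nlinarith
  have hdist : ∀ p ∈ closedBall (cubeCenter ℓ 0 0) (11 * ℓ),
      dist (planePoint e x p) x ≤ (11 + 1 / 2) * d * ℓ := fun p hp =>
    dist_planePoint_le_of_dist_cubeCenter_le e x hℓ hp
  obtain ⟨s, hs, hsE⟩ := exists_continuousOn_dist_planePoint_le hE hx hε (by nlinarith)
    (by positivity) hℓ1 hflat hQ (K := closedBall (cubeCenter ℓ 0 0) (11 * ℓ))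
    fun p hp => by linarith [hdist p hp]
  refine not_inessential_of_approximate_section (δ := 4 * ℓ) hs (fun p hp => ⟨(hsE p hp).1, ?_⟩)
    (fun p hp => ?_) (by positivity) (by positivity) (by linarith)
  · rw [mem_closedBall]
    linarith [hdist p hp, (hsE p hp).2, dist_triangle_left (s p) x (planePoint e x p)]
  · have h := (lipschitzWith_planeCoord e x).dist_le_mul (s p) (planePoint e x p)
    rw [planeCoord_planePoint, NNReal.coe_one, one_mul, dist_comm (s p)] at h
    linarith [(hsE p hp).2]

lemma dist_le_of_dist_planeCoord_le (hd : 0 < d) (hℓ : 0 < ℓ) (hεd : ε * (32 * d) ≤ 1)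
    (hQ : IsFlatAt E ε x (32 * d * ℓ) Q) {y : F} (hy : y ∈ E) (hyx : dist y x < 32 * d * ℓ)
    (hyc : dist (planeCoord e x y) (cubeCenter ℓ 0 0) ≤ 7 * ℓ) : dist y x ≤ 12 * d * ℓ := by
  have hd1 : (1 : ℝ) ≤ d := by exact_mod_cast hd
  have hdℓ : ℓ ≤ d * ℓ := le_mul_of_one_le_left hℓ.le hd1
  have hεℓ : ε * (32 * d * ℓ) ≤ ℓ := by nlinarith
  obtain ⟨z, hz, hyz⟩ := (infDist_lt_iff ⟨x, hQ.mem⟩).1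
    ((hQ.infDist_plane_le y hy hyx).trans_lt (by linarith : _ < 2 * ℓ))
  have hzy := (lipschitzWith_planeCoord e x).dist_le_mul z y
  rw [NNReal.coe_one, one_mul, dist_comm z] at hzy
  have hzx : dist z x ≤ (9 + 1 / 2) * d * ℓ := by
    rw [← planePoint_planeCoord e x (Q.vsub_mem_direction hz hQ.mem)]
    exact dist_planePoint_le_of_dist_cubeCenter_le e x hℓ
      (by linarith [dist_triangle (planeCoord e x z) (planeCoord e x y) (cubeCenter ℓ 0 0)])
  linarith [dist_triangle y z x]

end FlatCoordinates

theorem exists_lipschitzWith_graph_le_hausdorffMeasure {d : ℕ} (hd : 0 < d) {F : Type*}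
    [NormedAddCommGroup F] [InnerProductSpace ℝ F] [FiniteDimensional ℝ F] [MeasurableSpace F]
    [BorelSpace F] {c A : ℝ} (hc : 0 < c) (hA : 0 < A) :
    ∃ M : NNReal, ∀ {E : Set F} {ε r : ℝ} {x : F} {Q : AffineSubspace ℝ F}, IsClosed E →
      (∀ y ∈ E, ∀ t, 0 < t → t ≤ 1 → ENNReal.ofReal (c * t ^ d) ≤ μH[(d : ℝ)] (E ∩ ball y t)) →
      (∀ y ∈ E, ∀ t, 0 < t → t ≤ 1 → ∃ Q, IsFlatAt E ε y t Q) →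
      0 < ε → ε * (32 * d) ≤ 1 → x ∈ E → 0 < r → r ≤ 1 →
      μH[(d : ℝ)] (E ∩ ball x r) ≤ ENNReal.ofReal (A * r ^ d) →
      Module.finrank ℝ Q.direction = d → IsFlatAt E ε x r Q →
      ∃ g : Q.direction → Q.directionᗮ, LipschitzWith M g ∧
        ENNReal.ofReal ((r / (32 * d)) ^ d / 2) ≤ μH[(d : ℝ)]
          (E ∩ {y | ∃ v : Q.direction, y = x + (v : F) + (g v : F)} ∩ ball x r) := by
  have hd1 : (1 : ℝ) ≤ d := by exact_mod_cast hd
  obtain ⟨M, hM⟩ := exists_lipschitzOnWith_section d hc (A := A * (32 * d) ^ d) (by positivity)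
  refine ⟨lipschitzExtensionConstant F * M,
    fun {E ε r x Q} hE hlow hflat hε hεd hx hr hr1 hup hQd hQ => ?_⟩
  obtain ⟨ℓ, rfl⟩ : ∃ ℓ, 32 * d * ℓ = r := ⟨r / (32 * d), by field_simp⟩
  have hℓ : 0 < ℓ := pos_of_mul_pos_right hr (by positivity)
  have hdℓ : ℓ ≤ d * ℓ := le_mul_of_one_le_left hℓ.le hd1
  have hsub : E ∩ closedBall x (16 * d * ℓ) ⊆ E ∩ ball x (32 * d * ℓ) :=
    inter_subset_inter_right E (closedBall_subset_ball (by linarith))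
  let e : Q.direction ≃ₗᵢ[ℝ] EuclideanSpace ℝ (Fin d) :=
    ((stdOrthonormalBasis ℝ Q.direction).reindex (finCongr hQd)).repr
  obtain ⟨G, f, hG, -, hfE, hfπ, hf⟩ := hM (μ := μH[(d : ℝ)]) (lipschitzWith_planeCoord e x)
    (volume_image_planeCoord_le e x) ((isCompact_closedBall x (16 * d * ℓ)).inter_left hE) hℓ
    ((measure_mono hsub).trans (hup.trans_eq (by rw [mul_pow, mul_assoc])))
    (fun y hy hyc t ht htℓ => (hlow y hy.1 t ht (by linarith)).trans <| measure_mono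
      fun z hz => ⟨⟨hz.1, mem_closedBall.2 (by
        linarith [dist_le_of_dist_planeCoord_le hd hℓ hεd hQ hy.1 (hsub hy).2 hyc,
          mem_ball.1 hz.2, dist_triangle z y x])⟩, hz.2⟩)
    (not_inessential_planeCoord hd hE hx hε hεd hℓ hr1 hflat hQ)
  obtain ⟨g, hg, hfg⟩ := exists_lipschitzWith_graph e x hfπ hf
  refine ⟨g, hg, ?_⟩
  calc ENNReal.ofReal ((32 * d * ℓ / (32 * d)) ^ d / 2) = ENNReal.ofReal (ℓ ^ d / 2) := by
        rw [mul_div_cancel_left₀ ℓ (by positivity)]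
    _ ≤ volume G := hG
    _ = volume (planeCoord e x '' (f '' G)) := by rw [hfπ.image_image]
    _ ≤ μH[(d : ℝ)] (f '' G) := volume_image_planeCoord_le e x _
    _ ≤ _ := by
      refine measure_mono (image_subset_iff.2 fun p hp => ?_)
      exact ⟨⟨(hsub (hfE hp)).1, hfg p hp⟩, (hsub (hfE hp)).2⟩

section LARRF

variable {n d : ℕ} {ε C₀ r : ℝ} {x y : V n} {A B E : Set (V n)}

lemma nhd_comm : nhd x r A B = nhd x r B A := by
  rw [nhd, nhd, max_comm]

lemma infDist_le_of_nhd_le (hr : 0 < r) (hx : x ∈ B) (h : nhd x r A B ≤ ε) (hy : y ∈ A)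
    (hyx : dist y x < r) : infDist y B ≤ ε * r := by
  rw [nhd, inv_mul_le_iff₀ hr, mul_comm r] at h
  have hle : ∀ z ∈ A ∩ ball x r, infDist z B ≤ r := fun z hz =>
    (infDist_le_dist_of_mem hx).trans (mem_ball.1 hz.2).le
  have hbdd : BddAbove (range fun z => ⨆ _ : z ∈ A ∩ ball x r, infDist z B) :=
    ⟨r, forall_mem_range.2 fun z => Real.iSup_le (hle z) hr.le⟩
  have hmem : y ∈ A ∩ ball x r := ⟨hy, hyx⟩
  calc infDist y B = ⨆ _ : y ∈ A ∩ ball x r, infDist y B := by simp only [ciSup_pos hmem]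
    _ ≤ ⨆ z ∈ A ∩ ball x r, infDist z B := le_ciSup hbdd y
    _ ≤ ε * r := (le_max_left _ _).trans h

lemma IsLARRF.exists_isFlatAt (hE : IsLARRF n d ε C₀ E) (hx : x ∈ E) (hr : 0 < r) (hr1 : r ≤ 1) :
    ∃ Q : AffineSubspace ℝ (V n), Module.finrank ℝ Q.direction = d ∧ IsFlatAt E ε x r Q := by
  obtain ⟨_, ⟨Q, rfl, hQd, -⟩, hxQ, hQ⟩ := (hE.2.2 x hx r hr hr1).1
  exact ⟨Q, hQd, hxQ, fun _ => infDist_le_of_nhd_le hr hx hQ,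
    fun _ => infDist_le_of_nhd_le hr hxQ (nhd_comm.trans_le hQ)⟩

end LARRF

/-- **Theorem 15.4**: a LARRF set contains big pieces of Lipschitz graphs:
for `x ∈ E` and `0 < r ≤ 1` there is a `d`-plane (written `p₀ + D`) and an
`M`-Lipschitz map `F : D → Dᗮ` whose graph meets `E ∩ B(x,r)` in a set of
`H^d`-measure at least `θ r^d`, with `θ`, `M` depending only on `n`, `d`, `C₀`. -/
theorem thm_15_4 (n d : ℕ) (hd : 0 < d) (hdn : d < n) :
    ∃ ε₀ : ℝ, 0 < ε₀ ∧
    ∀ C₀ : ℝ, 1 ≤ C₀ →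
    ∃ θ M : ℝ, 0 < θ ∧ 0 < M ∧
    ∀ ε : ℝ, 0 < ε → ε ≤ ε₀ →
    ∀ E : Set (V n), IsLARRF n d ε C₀ E →
    ∀ x ∈ E, ∀ r : ℝ, 0 < r → r ≤ 1 →
    ∃ (p₀ : V n) (D : Submodule ℝ (V n)) (F : D → Dᗮ),
      Module.finrank ℝ D = d ∧
      (∀ v w : D, ‖F v - F w‖ ≤ M * ‖v - w‖) ∧
      ENNReal.ofReal (θ * r ^ d) ≤
        μH[(d : ℝ)]
          (E ∩ {y : V n | ∃ v : D, y = p₀ + (v : V n) + (F v : V n)} ∩ ball x r) := by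
  have hd' : (0 : ℝ) < 32 * d := by positivity
  refine ⟨1 / (32 * d), by positivity, fun C₀ hC₀ => ?_⟩
  have hC₀' : 0 < C₀ := by linarith
  obtain ⟨M, hM⟩ := exists_lipschitzWith_graph_le_hausdorffMeasure hd (F := V n)
    (inv_pos.2 hC₀') hC₀'
  refine ⟨1 / (32 * d) ^ d / 2, M + 1, by positivity, by positivity,
    fun ε hε hε₀ E hE x hx r hr hr1 => ?_⟩
  obtain ⟨Q, hQd, hQ⟩ := hE.exists_isFlatAt hx hr hr1
  obtain ⟨g, hg, hgE⟩ := hM hE.2.1 (fun y hy t ht ht1 => (hE.2.2 y hy t ht ht1).2.1)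
    (fun y hy t ht ht1 => (hE.exists_isFlatAt hy ht ht1).imp fun _ h => h.2) hε
    ((le_div_iff₀ hd').1 hε₀) hx hr hr1 (hE.2.2 x hx r hr hr1).2.2 hQd hQ
  refine ⟨x, Q.direction, g, hQd, fun v w => ?_, (le_of_eq ?_).trans hgE⟩
  · exact (hg.norm_sub_le v w).trans (by gcongr; linarith)
  · rw [div_pow]; ring_nf
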